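/- arXiv:1710.10484 — 2 statements merged into one kernel-verified Lean document; each statement's English description precedes it below -/
import Mathlib

section
/- Let α ∈ [0,1), let G be a connected graph with ρ_α(G) ≥ 2, and let u ∈ V(G). Let T be a tree of order n and let G_T(u) be the graph obtained by identifying u with a vertex of T. Then ρ_α(G_T(u)) ≥ ρ_α(G_{n,1}(u)), with equality if and only if G_T(u) is isomorphic to G_{n,1}(u). -/
/-!
Number the vertices of `T` other than the root `t` as `0, …, m - 1` in order of their distance to
`t`, so that the parent of every vertex comes earlier (`exists_attachTreeIso`). Then `G_T(u)` and
`G_{n,1}(u)` both live on `V ⊕ Fin m` and arise from `G` by joining each new vertex `i` to a parent;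
for the path the parent is the immediate predecessor, which is the latest possible choice.

Let `x > 0` be the Perron vector of `G_{n,1}(u)`, with eigenvalue `ρ ≥ ρ_α(G) ≥ 2`. The eigenvalue
equations on the path force `x` to decrease strictly from `u` to the free end (`path_strictAnti`).
Each new edge `{i, j}` contributes `α (xᵢ² + xⱼ²) + 2 (1 - α) xᵢ xⱼ` to the quadratic form of `A_α`
(`parentGraph_quad`), so an earlier parent contributes strictly more. Using `x` as a test vector
for `G_T(u)` in the Rayleigh quotient gives the inequality, and equality forces every parent to be
the immediate predecessor, that is, the two graphs are isomorphic (`parentGraph_compare`).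
-/

/-- The spectral radius (largest eigenvalue) of a real symmetric matrix, as the
supremum of its set of real eigenvalues. -/
noncomputable def specRad {n : Type*} [Fintype n] (M : Matrix n n ℝ) : ℝ :=
  sSup {t : ℝ | ∃ v : n → ℝ, v ≠ 0 ∧ M.mulVec v = t • v}

/-- The matrix `A_α(G) = α·D(G) + (1-α)·A(G)`. -/
noncomputable def Aalpha {V : Type*} [Fintype V] [DecidableEq V]
    (α : ℝ) (G : SimpleGraph V) : Matrix V V ℝ :=
  letI := Classical.decRel G.Adj
  α • Matrix.diagonal (fun v => (G.degree v : ℝ)) + (1 - α) • G.adjMatrix ℝ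

/-- The `α`-index `ρ_α(G)`: the spectral radius of `A_α(G)`. -/
noncomputable def rhoAlpha {V : Type*} [Fintype V] [DecidableEq V]
    (α : ℝ) (G : SimpleGraph V) : ℝ :=
  specRad (Aalpha α G)


def attachRel {V : Type*} (H : SimpleGraph V) (u v : V) (a b : ℕ) :
    V ⊕ (Fin a ⊕ Fin b) → V ⊕ (Fin a ⊕ Fin b) → Prop
  | Sum.inl x, Sum.inl y => H.Adj x y
  | Sum.inl x, Sum.inr (Sum.inl i) => x = u ∧ i.val = 0
  | Sum.inl x, Sum.inr (Sum.inr i) => x = v ∧ i.val = 0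
  | Sum.inr (Sum.inl i), Sum.inr (Sum.inl j) => i.val + 1 = j.val
  | Sum.inr (Sum.inr i), Sum.inr (Sum.inr j) => i.val + 1 = j.val
  | _, _ => False

/-- The graph `H_{a+1,b+1}(u,v)` obtained from `H` by attaching a path with `a + 1`
vertices to `u` (its `a` new vertices being `Fin a`) and a path with `b + 1`
vertices to `v` (its `b` new vertices being `Fin b`); attaching a path means
identifying one of its end-vertices with the root vertex. -/
def attachTwoPaths {V : Type*} (H : SimpleGraph V) (u v : V) (a b : ℕ) :
    SimpleGraph (V ⊕ (Fin a ⊕ Fin b)) :=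
  SimpleGraph.fromRel (attachRel H u v a b)

def attachTreeRel {V VT : Type*} (G : SimpleGraph V) (u : V) (T : SimpleGraph VT) (t : VT) :
    V ⊕ {x : VT // x ≠ t} → V ⊕ {x : VT // x ≠ t} → Prop
  | Sum.inl x, Sum.inl y => G.Adj x y
  | Sum.inl x, Sum.inr y => x = u ∧ T.Adj t y.val
  | Sum.inr x, Sum.inr y => T.Adj x.val y.val
  | _, _ => False

/-- The graph `G_T(u)` obtained by identifying the vertex `u` of `G` with the
vertex `t` of `T`. -/
def attachTree {V VT : Type*} (G : SimpleGraph V) (u : V) (T : SimpleGraph VT) (t : VT) :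
    SimpleGraph (V ⊕ {x : VT // x ≠ t}) :=
  SimpleGraph.fromRel (attachTreeRel G u T t)

/-! ### The largest eigenvalue of a symmetric matrix -/

/-- For a real symmetric matrix the supremum defining `specRad` is attained, and
`specRad M • 1 - M` is positive semidefinite. -/
theorem specRad_spec {ι : Type*} [Fintype ι] [DecidableEq ι] [Nonempty ι] {M : Matrix ι ι ℝ}
    (hM : M.IsHermitian) :
    (∃ v : ι → ℝ, v ≠ 0 ∧ M.mulVec v = specRad M • v) ∧
      ((specRad M) • (1 : Matrix ι ι ℝ) - M).PosSemidef := by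
  set S := {t : ℝ | ∃ v : ι → ℝ, v ≠ 0 ∧ M.mulVec v = t • v} with hS
  have hfin : S.Finite := by
    refine (Module.End.finite_hasEigenvalue (Matrix.toLin' M)).subset ?_
    rintro t ⟨v, hv, hMv⟩
    exact Module.End.hasEigenvalue_of_hasEigenvector (x := v)
      ⟨Module.End.mem_eigenspace_iff.2 (by simpa using hMv), hv⟩
  have hne : S.Nonempty := by
    obtain ⟨i⟩ := ‹Nonempty ι›
    refine ⟨hM.eigenvalues i, _, ?_, hM.mulVec_eigenvectorBasis i⟩
    intro h
    exact hM.eigenvectorBasis.orthonormal.ne_zero i (by ext j; exact congrFun h j)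
  refine ⟨hne.csSup_mem hfin, ?_⟩
  have hH : ((specRad M) • (1 : Matrix ι ι ℝ) - M).IsHermitian :=
    (Matrix.isHermitian_one.smul (by simp [IsSelfAdjoint])).sub hM
  rw [hH.posSemidef_iff_eigenvalues_nonneg]
  intro i
  have h1 := hH.mulVec_eigenvectorBasis i
  have h2 : specRad M - hH.eigenvalues i ∈ S := by
    refine ⟨hH.eigenvectorBasis i, ?_, ?_⟩
    · intro h
      exact hH.eigenvectorBasis.orthonormal.ne_zero i (by ext j; exact congrFun h j)
    · rw [Matrix.sub_mulVec, Matrix.smul_mulVec, Matrix.one_mulVec] at h1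
      rw [sub_smul, ← h1]
      abel
  have h3 : specRad M - hH.eigenvalues i ≤ specRad M := le_csSup hfin.bddAbove h2
  simpa using h3

/-! ### The matrix `A_α` and its largest eigenvalue -/

theorem Aalpha_mulVec {V : Type*} [Fintype V] [DecidableEq V] (α : ℝ) (G : SimpleGraph V)
    [inst : DecidableRel G.Adj] (x : V → ℝ) (a : V) :
    (Aalpha α G).mulVec x a = ∑ b, if G.Adj a b then α * x a + (1 - α) * x b else 0 := by
  obtain rfl : inst = Classical.decRel G.Adj := Subsingleton.elim _ _
  unfold Aalpha
  simp only [Matrix.add_mulVec, Matrix.smul_mulVec, Pi.add_apply, Pi.smul_apply,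
    Matrix.mulVec_diagonal, SimpleGraph.adjMatrix_mulVec_apply, smul_eq_mul]
  rw [← Finset.sum_filter, Finset.sum_add_distrib, Finset.sum_const, ← Finset.mul_sum,
    ← SimpleGraph.neighborFinset_eq_filter, SimpleGraph.card_neighborFinset_eq_degree, nsmul_eq_mul]
  ring

theorem Aalpha_isHermitian {V : Type*} [Fintype V] [DecidableEq V] (α : ℝ) (G : SimpleGraph V) :
    (Aalpha α G).IsHermitian := by
  let _ := Classical.decRel G.Adj
  have h : (α • Matrix.diagonal (fun v => (G.degree v : ℝ)) +
      (1 - α) • G.adjMatrix ℝ).IsSymm :=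
    ((Matrix.isSymm_diagonal _).smul _).add (G.isSymm_adjMatrix.smul _)
  unfold Aalpha
  exact Matrix.isHermitian_iff_isSymm.2 h

theorem exists_eigenvector {V : Type*} [Fintype V] [DecidableEq V] [Nonempty V]
    (α : ℝ) (G : SimpleGraph V) :
    ∃ v : V → ℝ, v ≠ 0 ∧ (Aalpha α G).mulVec v = rhoAlpha α G • v :=
  (specRad_spec (Aalpha_isHermitian α G)).1

theorem rayleigh_le {V : Type*} [Fintype V] [DecidableEq V] [Nonempty V]
    (α : ℝ) (G : SimpleGraph V) (x : V → ℝ) :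
    x ⬝ᵥ (Aalpha α G).mulVec x ≤ rhoAlpha α G * (x ⬝ᵥ x) := by
  have h := (specRad_spec (Aalpha_isHermitian α G)).2.dotProduct_mulVec_nonneg x
  simp only [star_trivial, Matrix.sub_mulVec, Matrix.smul_mulVec, Matrix.one_mulVec,
    dotProduct_sub, dotProduct_smul, smul_eq_mul] at h
  exact sub_nonneg.1 h

/-- A maximizer of the Rayleigh quotient is an eigenvector. -/
theorem eigenvector_of_rayleigh_eq {V : Type*} [Fintype V] [DecidableEq V] [Nonempty V]
    (α : ℝ) (G : SimpleGraph V) (x : V → ℝ)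
    (hx : x ⬝ᵥ (Aalpha α G).mulVec x = rhoAlpha α G * (x ⬝ᵥ x)) :
    (Aalpha α G).mulVec x = rhoAlpha α G • x := by
  have h := ((specRad_spec (Aalpha_isHermitian α G)).2.dotProduct_mulVec_zero_iff x).1 (by
    simp only [star_trivial, Matrix.sub_mulVec, Matrix.smul_mulVec, Matrix.one_mulVec,
      dotProduct_sub, dotProduct_smul, smul_eq_mul]
    exact sub_eq_zero.2 hx.symm)
  simp only [Matrix.sub_mulVec, Matrix.smul_mulVec, Matrix.one_mulVec] at h
  exact (sub_eq_zero.1 h).symm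

theorem quad_eq {V : Type*} [Fintype V] [DecidableEq V] (α : ℝ) (G : SimpleGraph V)
    [DecidableRel G.Adj] (x : V → ℝ) :
    x ⬝ᵥ (Aalpha α G).mulVec x =
      ∑ a, ∑ b, if G.Adj a b then x a * (α * x a + (1 - α) * x b) else 0 := by
  simp only [dotProduct, Aalpha_mulVec, Finset.mul_sum, mul_ite, mul_zero]

/-- A Perron vector: replacing the entries of an eigenvector for `ρ_α` by their absolute values does
not decrease the quadratic form, so the result is again an eigenvector, and connectedness makes it
entrywise positive. -/
theorem exists_pos_eigenvector {V : Type*} [Fintype V] [DecidableEq V]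
    {α : ℝ} (hα1 : α < 1) {G : SimpleGraph V} (hG : G.Connected) :
    ∃ x : V → ℝ, (∀ a, 0 < x a) ∧ (Aalpha α G).mulVec x = rhoAlpha α G • x := by
  classical
  have := hG.nonempty
  obtain ⟨v, hv0, hv⟩ := exists_eigenvector α G
  have hx : (Aalpha α G).mulVec |v| = rhoAlpha α G • |v| := by
    have hsq : |v| ⬝ᵥ |v| = v ⬝ᵥ v := by simp [dotProduct]
    apply eigenvector_of_rayleigh_eq
    refine le_antisymm (rayleigh_le α G _) ?_
    have h1 : v ⬝ᵥ (Aalpha α G).mulVec v = rhoAlpha α G * (v ⬝ᵥ v) := by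
      rw [hv, dotProduct_smul, smul_eq_mul]
    rw [hsq, ← h1, quad_eq, quad_eq]
    refine Finset.sum_le_sum fun a _ => Finset.sum_le_sum fun b _ => ?_
    split_ifs
    · have h2 : v a * v b ≤ |v a| * |v b| := by rw [← abs_mul]; exact le_abs_self _
      have h3 : |v a| * |v a| = v a * v a := abs_mul_abs_self _
      simp only [Pi.abs_apply]
      nlinarith
    · exact le_rfl
  refine ⟨|v|, ?_, hx⟩
  -- A zero entry of a nonnegative eigenvector forces zeros at all neighbours.
  have hprop : ∀ a b, G.Adj a b → |v| a = 0 → |v| b = 0 := by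
    intro a b hab ha
    have h1 := congrFun hx a
    rw [Aalpha_mulVec, Pi.smul_apply, ha, smul_zero] at h1
    have h2 := (Finset.sum_eq_zero_iff_of_nonneg (fun c _ => ?_)).1 h1 b (Finset.mem_univ b)
    · rw [if_pos hab, mul_zero, zero_add] at h2
      exact (mul_eq_zero.1 h2).resolve_left (by linarith)
    · split_ifs
      · rw [mul_zero, zero_add]
        exact mul_nonneg (by linarith) (abs_nonneg (v c))
      · exact le_rfl
  intro a
  refine lt_of_le_of_ne (abs_nonneg (v a)) fun h0 => hv0 ?_
  funext b
  obtain ⟨w⟩ := hG.preconnected a b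
  have : |v| b = 0 := by
    have h0' : |v| a = 0 := h0.symm
    clear h0
    induction w with
    | nil => exact h0'
    | cons h _ ih => exact ih (hprop _ _ h h0')
  simpa using this

theorem eigenvector_transport {V W : Type*} [Fintype V] [DecidableEq V] [Fintype W]
    [DecidableEq W] (α : ℝ) {G : SimpleGraph V} {H : SimpleGraph W} (e : G ≃g H) (t : ℝ)
    (h : ∃ v : V → ℝ, v ≠ 0 ∧ (Aalpha α G).mulVec v = t • v) :
    ∃ v : W → ℝ, v ≠ 0 ∧ (Aalpha α H).mulVec v = t • v := by
  classical
  obtain ⟨v, hv0, hv⟩ := h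
  refine ⟨v ∘ e.symm, ?_, ?_⟩
  · intro h
    apply hv0
    funext a
    simpa using congrFun h (e a)
  · funext b
    have h1 := congrFun hv (e.symm b)
    rw [Aalpha_mulVec] at h1 ⊢
    rw [← e.toEquiv.sum_comp]
    simp only [Pi.smul_apply, Function.comp_apply] at h1 ⊢
    rw [← h1]
    refine Finset.sum_congr rfl fun c _ => ?_
    have : H.Adj b (e c) ↔ G.Adj (e.symm b) c := by
      rw [← e.map_adj_iff]; simp
    simp [this]

theorem rhoAlpha_congr {V W : Type*} [Fintype V] [DecidableEq V] [Fintype W] [DecidableEq W]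
    (α : ℝ) {G : SimpleGraph V} {H : SimpleGraph W} (e : G ≃g H) :
    rhoAlpha α G = rhoAlpha α H := by
  unfold rhoAlpha specRad
  congr 1
  ext t
  exact ⟨eigenvector_transport α e t, eigenvector_transport α e.symm t⟩

/-! ### Attaching a rooted tree given by a parent function -/

/-- The vertices that may serve as parents, listed as `u, 0, 1, …, m - 1`. -/
def slot {V : Type*} {m : ℕ} (u : V) (k : Fin (m + 1)) : V ⊕ Fin m :=
  Fin.cases (Sum.inl u) Sum.inr k

@[simp] theorem slot_zero {V : Type*} {m : ℕ} (u : V) : slot (m := m) u 0 = Sum.inl u := rfl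

@[simp] theorem slot_succ {V : Type*} {m : ℕ} (u : V) (i : Fin m) :
    slot u i.succ = Sum.inr i := rfl

theorem slot_eq_inr {V : Type*} {m : ℕ} {u : V} {k : Fin (m + 1)} {i : Fin m} :
    slot u k = Sum.inr i ↔ k = i.succ := by
  cases k using Fin.cases <;> simp [Fin.succ_ne_zero, eq_comm]

/-- The graph obtained from `G` by adding new vertices `0, …, m - 1`, each new vertex `i` being
joined to its parent `slot u (q i)`, which is `u` or an earlier new vertex. Thus a rooted tree,
its non-root vertices numbered with parents first, is attached to `G` at `u`. -/
def parentGraph {V : Type*} (G : SimpleGraph V) (u : V) {m : ℕ} (q : Fin m → Fin (m + 1))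
    (hq : ∀ i, q i ≤ i.castSucc) : SimpleGraph (V ⊕ Fin m) where
  Adj a b := (∃ v w, a = Sum.inl v ∧ b = Sum.inl w ∧ G.Adj v w) ∨
    (∃ i, a = Sum.inr i ∧ b = slot u (q i)) ∨ (∃ i, b = Sum.inr i ∧ a = slot u (q i))
  symm := ⟨by
    rintro a b (⟨v, w, ha, hb, h⟩ | h | h)
    · exact Or.inl ⟨w, v, hb, ha, h.symm⟩
    · exact Or.inr (Or.inr h)
    · exact Or.inr (Or.inl h)⟩
  loopless := ⟨by
    have key : ∀ i, Sum.inr i ≠ slot u (q i) := by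
      intro i h
      have h1 := hq i
      rw [slot_eq_inr.1 h.symm] at h1
      exact absurd h1 (not_le.2 (Fin.castSucc_lt_succ))
    rintro a (⟨v, w, rfl, hb, h⟩ | ⟨i, rfl, h⟩ | ⟨i, rfl, h⟩)
    · exact h.ne (Sum.inl_injective hb)
    · exact key i h
    · exact key i h⟩

section parentGraph

variable {V : Type*} {G : SimpleGraph V} {u : V} {m : ℕ} {q : Fin m → Fin (m + 1)}
  {hq : ∀ i, q i ≤ i.castSucc}

theorem parentGraph_adj_inl_inl (v w : V) :
    (parentGraph G u q hq).Adj (Sum.inl v) (Sum.inl w) ↔ G.Adj v w := by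
  simp [parentGraph]

theorem parentGraph_adj_inl_inr (v : V) (i : Fin m) :
    (parentGraph G u q hq).Adj (Sum.inl v) (Sum.inr i) ↔ slot u (q i) = Sum.inl v := by
  simp [parentGraph, eq_comm]

theorem parentGraph_adj_inr_inl (v : V) (i : Fin m) :
    (parentGraph G u q hq).Adj (Sum.inr i) (Sum.inl v) ↔ slot u (q i) = Sum.inl v := by
  simp [parentGraph, eq_comm]

theorem parentGraph_adj_inr_inr (i j : Fin m) :
    (parentGraph G u q hq).Adj (Sum.inr i) (Sum.inr j) ↔
      slot u (q i) = Sum.inr j ∨ slot u (q j) = Sum.inr i := by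
  simp [parentGraph, eq_comm]

theorem parentGraph_adj_parent (i : Fin m) :
    (parentGraph G u q hq).Adj (Sum.inr i) (slot u (q i)) :=
  Or.inr (Or.inl ⟨i, rfl, rfl⟩)

theorem parentGraph_connected (hG : G.Connected) : (parentGraph G u q hq).Connected := by
  have hr : ∀ a, (parentGraph G u q hq).Reachable a (Sum.inl u) := by
    rintro (v | i)
    · exact (hG.preconnected v u).map
        (⟨Sum.inl, fun h => (parentGraph_adj_inl_inl _ _).2 h⟩ : G →g parentGraph G u q hq)
    · induction i using WellFoundedLT.induction with
      | _ i ih =>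
        have h := (parentGraph_adj_parent (G := G) (u := u) (hq := hq) i).reachable
        have hi := hq i
        revert h hi
        cases q i using Fin.cases with
        | zero => exact fun h _ => h
        | succ j => exact fun h hi => h.trans (ih j (Fin.succ_le_castSucc_iff.1 hi))
  exact { preconnected := fun a b => (hr a).trans (hr b).symm, nonempty := ⟨Sum.inl u⟩ }

variable [Fintype V] [DecidableEq V]

open Classical in
theorem parentGraph_sum_inr (f : V ⊕ Fin m → ℝ) (i : Fin m) :
    (∑ b, if (parentGraph G u q hq).Adj (Sum.inr i) b then f b else 0) =
      f (slot u (q i)) + ∑ j, if slot u (q j) = Sum.inr i then f (Sum.inr j) else 0 := by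
  have h1 : f (slot u (q i)) = ∑ b, if slot u (q i) = b then f b else 0 := by simp
  rw [h1, Fintype.sum_sum_type, Fintype.sum_sum_type, add_assoc, ← Finset.sum_add_distrib]
  congr 1
  · simp only [parentGraph_adj_inr_inl]
  · refine Finset.sum_congr rfl fun j _ => ?_
    rw [parentGraph_adj_inr_inr]
    -- Two new vertices cannot be parents of each other.
    have hex : ¬ (slot u (q i) = Sum.inr j ∧ slot u (q j) = Sum.inr i) := by
      rintro ⟨h1, h2⟩
      have h3 := hq i
      have h4 := hq j
      rw [slot_eq_inr] at h1 h2
      rw [h1] at h3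
      rw [h2] at h4
      simp only [Fin.le_def, Fin.val_succ, Fin.val_castSucc] at h3 h4
      omega
    by_cases ha : slot u (q i) = Sum.inr j <;> by_cases hb : slot u (q j) = Sum.inr i
    · exact absurd ⟨ha, hb⟩ hex
    all_goals simp [ha, hb]

open Classical in
theorem parentGraph_sum_inl (f : V ⊕ Fin m → ℝ) (v : V) :
    (∑ b, if (parentGraph G u q hq).Adj (Sum.inl v) b then f b else 0) =
      (∑ w, if G.Adj v w then f (Sum.inl w) else 0) +
        ∑ j, if slot u (q j) = Sum.inl v then f (Sum.inr j) else 0 := by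
  rw [Fintype.sum_sum_type]
  simp only [parentGraph_adj_inl_inl, parentGraph_adj_inl_inr]

/-- The quadratic form of `parentGraph` is that of `G` plus one term for each new edge; hence it
depends on the attached tree only through the values of `x` at the parents. -/
theorem parentGraph_quad (α : ℝ) (x : V ⊕ Fin m → ℝ) :
    x ⬝ᵥ (Aalpha α (parentGraph G u q hq)).mulVec x =
      (fun v => x (Sum.inl v)) ⬝ᵥ (Aalpha α G).mulVec (fun v => x (Sum.inl v)) +
        ∑ i, (α * (x (Sum.inr i) ^ 2 + x (slot u (q i)) ^ 2) +
          2 * (1 - α) * x (Sum.inr i) * x (slot u (q i))) := by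
  classical
  rw [quad_eq, quad_eq]
  have h2 : ∀ j, x (slot u (q j)) * (α * x (slot u (q j)) + (1 - α) * x (Sum.inr j)) =
      ∑ a, if slot u (q j) = a then x a * (α * x a + (1 - α) * x (Sum.inr j)) else 0 := by
    intro j; simp
  have h3 : ∀ i, α * (x (Sum.inr i) ^ 2 + x (slot u (q i)) ^ 2) +
      2 * (1 - α) * x (Sum.inr i) * x (slot u (q i)) =
      x (Sum.inr i) * (α * x (Sum.inr i) + (1 - α) * x (slot u (q i))) +
      x (slot u (q i)) * (α * x (slot u (q i)) + (1 - α) * x (Sum.inr i)) := by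
    intro i; ring
  simp only [h3, Finset.sum_add_distrib, h2]
  rw [Finset.sum_comm (s := Finset.univ (α := Fin m)), Fintype.sum_sum_type,
    Fintype.sum_sum_type (fun a => ∑ j, if slot u (q j) = a then _ else _)]
  simp only [parentGraph_sum_inr, parentGraph_sum_inl, Finset.sum_add_distrib]
  ring

/-- Attaching a tree does not decrease the `α`-index: extend an eigenvector of `G` by zero. -/
theorem rhoAlpha_le_parentGraph {α : ℝ} (hα0 : 0 ≤ α) [Nonempty V] :
    rhoAlpha α G ≤ rhoAlpha α (parentGraph G u q hq) := by
  obtain ⟨v, hv0, hv⟩ := exists_eigenvector α G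
  set x : V ⊕ Fin m → ℝ := Sum.elim v 0 with hx
  have h1 := rayleigh_le α (parentGraph G u q hq) x
  have h2 : x ⬝ᵥ x = v ⬝ᵥ v := by simp [dotProduct, Fintype.sum_sum_type, hx]
  have h4 : v ⬝ᵥ (Aalpha α G).mulVec v = rhoAlpha α G * (v ⬝ᵥ v) := by
    rw [hv, dotProduct_smul, smul_eq_mul]
  have h5 : 0 ≤ ∑ i, (α * (x (Sum.inr i) ^ 2 + x (slot u (q i)) ^ 2) +
          2 * (1 - α) * x (Sum.inr i) * x (slot u (q i))) := by
    refine Finset.sum_nonneg fun i _ => ?_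
    have : x (Sum.inr i) = 0 := rfl
    rw [this]
    have := mul_nonneg hα0 (sq_nonneg (x (slot u (q i))))
    linarith
  rw [parentGraph_quad, h2] at h1
  change v ⬝ᵥ (Aalpha α G).mulVec v + _ ≤ _ at h1
  have h6 : 0 < v ⬝ᵥ v := by
    refine lt_of_le_of_ne (Finset.sum_nonneg fun a _ => mul_self_nonneg (v a)) fun h => ?_
    exact hv0 (dotProduct_self_eq_zero.1 h.symm)
  rw [h4] at h1
  exact le_of_mul_le_mul_right (by linarith) h6

end parentGraph

/-! ### Comparison of a tree with the path -/

/-- Along the attached path, a positive eigenvector for `r ≥ 2` strictly decreases away from `G`: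
an interior vertex satisfies `(r - 2α) xᵢ = (1 - α) (xᵢ₋₁ + xᵢ₊₁)` with `r - 2α ≥ 2 (1 - α)`, so
the values are convex, and the equation at the free end starts the descent. -/
theorem path_strictAnti {V : Type*} [Fintype V] [DecidableEq V] {G : SimpleGraph V} {u : V} {m : ℕ}
    {α : ℝ} (hα1 : α < 1)
    (x : V ⊕ Fin m → ℝ) (hx : ∀ a, 0 < x a) {r : ℝ} (hr : 2 ≤ r)
    (heig : (Aalpha α (parentGraph G u Fin.castSucc fun _ => le_rfl)).mulVec x = r • x) :
    StrictAnti fun k : Fin (m + 1) => x (slot u k) := by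
  classical
  rw [Fin.strictAnti_iff_succ_lt]
  -- Descending induction, from the free end of the path.
  suffices H : ∀ k : ℕ, ∀ i : Fin m, m - i.val ≤ k → x (slot u i.succ) < x (slot u i.castSucc) from
    fun i => H m i (Nat.sub_le _ _)
  intro k
  induction k with
  | zero => intro i hi; omega
  | succ k ih =>
    intro i hi
    have h1 := congrFun heig (Sum.inr i)
    rw [Aalpha_mulVec, parentGraph_sum_inr, Pi.smul_apply, smul_eq_mul] at h1
    have h2 : (∑ j : Fin m, if slot u j.castSucc = Sum.inr i then
        α * x (Sum.inr i) + (1 - α) * x (Sum.inr j) else 0) < x (Sum.inr i) := by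
      have hiff : ∀ j : Fin m, slot u j.castSucc = Sum.inr i ↔ j.val = i.val + 1 := by
        intro j
        rw [slot_eq_inr, Fin.ext_iff]
        simp
      simp only [hiff]
      by_cases hm : i.val + 1 < m
      · rw [Finset.sum_eq_single (⟨i.val + 1, hm⟩ : Fin m)]
        · have h3 := ih ⟨i.val + 1, hm⟩ (by simp only; omega)
          rw [(hiff _).2 rfl, slot_succ] at h3
          rw [if_pos rfl]
          nlinarith
        · intro j _ hj
          rw [if_neg]
          intro h
          exact hj (Fin.ext h)
        · simp
      · rw [Finset.sum_eq_zero]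
        · exact hx _
        · intro j _
          rw [if_neg]
          have := j.isLt
          omega
    have h3 := hx (Sum.inr i)
    rw [slot_succ]
    have h4 : 2 * x (Sum.inr i) ≤ r * x (Sum.inr i) := by gcongr
    have h5 : (1 - α) * x (Sum.inr i) < (1 - α) * x (slot u i.castSucc) := by linarith
    exact lt_of_mul_lt_mul_left h5 (by linarith)

/-- The Perron vector `x` of the graph with the path `q = Fin.castSucc` is used as a test vector for
any other parent function `q`: since `q i ≤ i.castSucc` and `x` decreases along the path, each new
edge contributes at least as much to the quadratic form, and strictly more unless the parents
agree. -/
theorem parentGraph_compare {V : Type*} [Fintype V] [DecidableEq V] {G : SimpleGraph V} {u : V}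
    {m : ℕ} {q : Fin m → Fin (m + 1)} (hq : ∀ i, q i ≤ i.castSucc)
    {α : ℝ} (hα0 : 0 ≤ α) (hα1 : α < 1) (hG : G.Connected) (hρ : 2 ≤ rhoAlpha α G) :
    rhoAlpha α (parentGraph G u (Fin.castSucc (n := m)) fun _ => le_rfl) ≤
        rhoAlpha α (parentGraph G u q hq) ∧
      (rhoAlpha α (parentGraph G u q hq) =
        rhoAlpha α (parentGraph G u (Fin.castSucc (n := m)) fun _ => le_rfl) →
        q = Fin.castSucc) := by
  have := hG.nonempty
  obtain ⟨x, hx, heig⟩ := exists_pos_eigenvector (α := α) hα1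
    (parentGraph_connected (u := u) (q := Fin.castSucc (n := m)) (hq := fun _ => le_rfl) hG)
  have hanti := path_strictAnti hα1 x hx (hρ.trans (rhoAlpha_le_parentGraph hα0)) heig
  set ρP := rhoAlpha α (parentGraph G u (Fin.castSucc (n := m)) fun _ => le_rfl)
  set ρQ := rhoAlpha α (parentGraph G u q hq)
  have h1 : x ⬝ᵥ (Aalpha α (parentGraph G u (Fin.castSucc (n := m)) fun _ => le_rfl)).mulVec x
      = ρP * (x ⬝ᵥ x) := by
    rw [heig, dotProduct_smul, smul_eq_mul]
  have h2 : x ⬝ᵥ (Aalpha α (parentGraph G u q hq)).mulVec x ≤ ρQ * (x ⬝ᵥ x) := rayleigh_le _ _ _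
  rw [parentGraph_quad] at h1 h2
  have hpos : 0 < x ⬝ᵥ x :=
    Finset.sum_pos (fun a _ => mul_pos (hx a) (hx a)) ⟨Sum.inl u, Finset.mem_univ _⟩
  -- The contribution of the edge from `i` to a parent with value `s` increases with `s`.
  have hmono : ∀ i : Fin m, ∀ s t : ℝ, 0 < s → s < t →
      α * (x (Sum.inr i) ^ 2 + s ^ 2) + 2 * (1 - α) * x (Sum.inr i) * s <
      α * (x (Sum.inr i) ^ 2 + t ^ 2) + 2 * (1 - α) * x (Sum.inr i) * t := by
    intro i s t hs hst
    have h3 : α * s ^ 2 ≤ α * t ^ 2 := by gcongr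
    have h4 : 0 < 2 * (1 - α) * x (Sum.inr i) :=
      mul_pos (by linarith) (hx _)
    have h5 := mul_lt_mul_of_pos_left hst h4
    linarith
  have hle : ∀ i : Fin m, α * (x (Sum.inr i) ^ 2 + x (slot u i.castSucc) ^ 2) +
        2 * (1 - α) * x (Sum.inr i) * x (slot u i.castSucc) ≤
      α * (x (Sum.inr i) ^ 2 + x (slot u (q i)) ^ 2) +
        2 * (1 - α) * x (Sum.inr i) * x (slot u (q i)) := by
    intro i
    rcases (hq i).eq_or_lt with h | h
    · rw [h]
    · exact (hmono i _ _ (hx _) (hanti h)).le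
  have hsum := Finset.sum_le_sum fun i (_ : i ∈ Finset.univ) => hle i
  refine ⟨le_of_mul_le_mul_right (by linarith) hpos, fun heq => ?_⟩
  by_contra hne
  obtain ⟨i, hi⟩ := Function.ne_iff.1 hne
  have hlt := Finset.sum_lt_sum (fun i (_ : i ∈ Finset.univ) => hle i)
    ⟨i, Finset.mem_univ i, hmono i _ _ (hx _) (hanti ((hq i).lt_of_ne hi))⟩
  rw [heq] at h2
  linarith

/-! ### Presenting both graphs by parent functions -/

/-- `G_{m+1,1}(u)` as a parent graph: each vertex of the path hangs from its predecessor. -/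
def attachPathIso {V : Type*} (G : SimpleGraph V) (u : V) (m : ℕ) :
    attachTwoPaths G u u m 0 ≃g parentGraph G u (Fin.castSucc (n := m)) fun _ => le_rfl where
  toEquiv := Equiv.sumCongr (Equiv.refl V) (Equiv.sumEmpty (Fin m) (Fin 0))
  map_rel_iff' := by
    have h1 : ∀ (i : Fin m) v, slot u i.castSucc = Sum.inl v ↔ v = u ∧ i.val = 0 := by
      intro i v
      rcases i with ⟨_ | i, hi⟩
      · simp [show (Fin.castSucc (⟨0, hi⟩ : Fin m)) = 0 from rfl, eq_comm]
      · have : (Fin.castSucc (⟨i + 1, hi⟩ : Fin m)) = Fin.succ ⟨i, by omega⟩ := rfl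
        rw [this, slot_succ]
        simp
    have h2 : ∀ i j : Fin m, slot u i.castSucc = Sum.inr j ↔ j.val + 1 = i.val := by
      intro i j
      rw [slot_eq_inr, Fin.ext_iff]
      simp [eq_comm]
    rintro (v | i | i) (w | j | j)
    · have : G.Adj v w → v ≠ w := fun h => h.ne
      simp [parentGraph_adj_inl_inl, attachTwoPaths, attachRel, G.adj_comm w v]
      exact this
    · simp [parentGraph_adj_inl_inr, attachTwoPaths, attachRel, h1]
    · exact j.elim0
    · simp [parentGraph_adj_inr_inl, attachTwoPaths, attachRel, h1]
    · simp [parentGraph_adj_inr_inr, attachTwoPaths, attachRel, h2, Fin.ext_iff]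
      omega
    · exact j.elim0
    all_goals exact i.elim0

/-- A rooted tree is described by a parent map: its edges are exactly those joining a non-root
vertex to its parent, and the parent is nearer to the root. -/
theorem exists_parent {VT : Type*} {T : SimpleGraph VT} (hT : T.IsTree) (t : VT) :
    ∃ par : VT → VT, (∀ x, x ≠ t → T.dist t (par x) < T.dist t x) ∧
      ∀ x y, T.Adj x y ↔ (x ≠ t ∧ y = par x) ∨ (y ≠ t ∧ x = par y) := by
  have hex : ∀ x, ∃ y, x ≠ t → T.Adj x y ∧ T.dist t y < T.dist t x := by
    intro x
    by_cases hx : x = t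
    · exact ⟨x, fun h => absurd hx h⟩
    · obtain ⟨w, hw⟩ := hT.connected.exists_walk_length_eq_dist x t
      cases w with
      | nil => exact absurd rfl hx
      | cons h p =>
        refine ⟨_, fun _ => ⟨h, ?_⟩⟩
        have := T.dist_le p
        rw [SimpleGraph.Walk.length_cons] at hw
        rw [T.dist_comm (u := t), T.dist_comm (u := t)]
        omega
  choose par hpar using hex
  have huniq : ∀ x y z, T.Adj x y → T.Adj x z → T.dist t y < T.dist t x →
      T.dist t z < T.dist t x → y = z := by
    intro x y z hxy hxz hy hz
    obtain ⟨p, hp, -⟩ := hT.connected.exists_path_of_dist t x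
    have key : ∀ y, T.Adj x y → T.dist t y < T.dist t x → y = p.penultimate := by
      intro y hxy hy
      classical
      obtain ⟨r, hr, hrl⟩ := hT.connected.exists_path_of_dist t y
      refine hT.isAcyclic.eq_penultimate_of_adj_end hp hxy ?_
      refine hT.isAcyclic.mem_support_of_ne_mem_support_of_adj_of_isPath hp hr hxy fun hmem => ?_
      have h1 := T.dist_le (r.takeUntil x hmem)
      have h2 := r.length_takeUntil_le_length hmem
      omega
    rw [key y hxy hy, key z hxz hz]
  refine ⟨par, fun x hx => (hpar x hx).2, fun x y => ⟨fun h => ?_, ?_⟩⟩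
  · have hside : ∀ x y, T.Adj x y → T.dist t y < T.dist t x → x ≠ t ∧ y = par x := by
      intro x y h hlt
      have hx : x ≠ t := by rintro rfl; simp at hlt
      exact ⟨hx, huniq x _ _ h (hpar x hx).1 hlt (hpar x hx).2⟩
    rcases (hT.dist_ne_of_adj t h).lt_or_gt with hlt | hlt
    · exact Or.inr (hside y x h.symm hlt)
    · exact Or.inl (hside x y h hlt)
  · rintro (⟨hx, rfl⟩ | ⟨hy, rfl⟩)
    · exact (hpar x hx).1
    · exact (hpar y hy).1.symm

/-- Numbering the non-root vertices by distance to the root presents `G_T(u)` as a parent graph. -/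
theorem exists_attachTreeIso {V VT : Type*} [Fintype VT] [DecidableEq VT]
    (G : SimpleGraph V) (u : V) {T : SimpleGraph VT} (hT : T.IsTree) (t : VT) {m : ℕ}
    (hm : Fintype.card {x : VT // x ≠ t} = m) :
    ∃ (q : Fin m → Fin (m + 1)) (hq : ∀ i, q i ≤ i.castSucc),
      Nonempty (attachTree G u T t ≃g parentGraph G u q hq) := by
  obtain ⟨par, hdist, hadj⟩ := exists_parent hT t
  let e₀ : Fin m ≃ {x : VT // x ≠ t} := (Fintype.equivFinOfCardEq hm).symm
  let d : Fin m → ℕ := fun i => T.dist t (e₀ i)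
  let e : Fin m ≃ {x : VT // x ≠ t} := (Tuple.sort d).trans e₀
  have hmon : Monotone fun i => T.dist t (e i) := Tuple.monotone_sort d
  let q : Fin m → Fin (m + 1) := fun i =>
    if h : par (e i) = t then 0 else (e.symm ⟨par (e i), h⟩).succ
  have hq : ∀ i, q i ≤ i.castSucc := by
    intro i
    by_cases h : par (e i) = t
    · simp [q, h]
    · simp only [q, h, dite_false]
      rw [Fin.succ_le_castSucc_iff]
      by_contra hle
      have h1 := hmon (not_lt.1 hle)
      simp only [Equiv.apply_symm_apply] at h1
      exact absurd (hdist _ (e i).2) (not_lt.2 h1)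
  have h1 : ∀ (y : {x : VT // x ≠ t}) v, slot u (q (e.symm y)) = Sum.inl v ↔ v = u ∧ par y = t := by
    intro y v
    by_cases h : par y = t
    · simp [q, h, eq_comm]
    · simp [q, h]
  have h2 : ∀ y z : {x : VT // x ≠ t}, slot u (q (e.symm y)) = Sum.inr (e.symm z) ↔
      par y = z.val := by
    intro y z
    by_cases h : par y = t
    · simp [q, h, z.2.symm]
    · simp [q, h, Subtype.ext_iff]
  have h3 : ∀ y : {x : VT // x ≠ t}, T.Adj t y ↔ par y = t := by
    intro y
    rw [hadj]
    simp [y.2, eq_comm]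
  have h4 : ∀ y z : {x : VT // x ≠ t}, T.Adj y z ↔ par y = z.val ∨ par z = y.val := by
    intro y z
    rw [hadj]
    simp [y.2, z.2, eq_comm]
  refine ⟨q, hq, ⟨⟨Equiv.sumCongr (Equiv.refl V) e.symm, ?_⟩⟩⟩
  rintro (v | y) (w | z)
  · have : G.Adj v w → v ≠ w := fun h => h.ne
    simp [parentGraph_adj_inl_inl, attachTree, attachTreeRel, G.adj_comm w v]
    exact this
  · simp [parentGraph_adj_inl_inr, attachTree, attachTreeRel, h1, h3]
  · simp [parentGraph_adj_inr_inl, attachTree, attachTreeRel, h1, h3]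
  · have : T.Adj y.val z.val → y ≠ z := fun h h' => h.ne (congrArg _ h')
    simp only [Equiv.sumCongr_apply, Sum.map_inr, parentGraph_adj_inr_inr, h2, ← h4, attachTree,
      SimpleGraph.fromRel_adj, attachTreeRel, T.adj_comm z.val y.val, or_self, ne_eq,
      Sum.inr.injEq]
    exact ⟨fun h => ⟨this h, h⟩, fun h => h.2⟩

/-- Let `α ∈ [0,1)`, `G` a connected graph with `ρ_α(G) ≥ 2`,
and `u ∈ V(G)`. If `T` is a tree of order `n` and `G_T(u)` is obtained by
identifying `u` with a vertex `t` of `T`, then `ρ_α(G_T(u)) ≥ ρ_α(G_{n,1}(u))`,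
with equality if and only if `G_T(u)` is isomorphic to `G_{n,1}(u)`.
Here `G_{n,1}(u) = attachTwoPaths G u u (n-1) 0`, i.e. `G` with a single path
on `n` vertices attached at `u`. -/
theorem tree_vs_path (α : ℝ) (hα0 : 0 ≤ α) (hα1 : α < 1)
    {V : Type*} [Fintype V] [DecidableEq V] (G : SimpleGraph V)
    (hconn : G.Connected) (hρ : 2 ≤ rhoAlpha α G) (u : V)
    {VT : Type*} [Fintype VT] [DecidableEq VT] (T : SimpleGraph VT)
    (hT : T.IsTree) {n : ℕ} (hn : Fintype.card VT = n) (t : VT) :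
    rhoAlpha α (attachTwoPaths G u u (n - 1) 0) ≤ rhoAlpha α (attachTree G u T t) ∧
      (rhoAlpha α (attachTree G u T t) = rhoAlpha α (attachTwoPaths G u u (n - 1) 0) ↔
        Nonempty (attachTree G u T t ≃g attachTwoPaths G u u (n - 1) 0)) := by
  classical
  have hcard : n - 1 = Fintype.card {x : VT // x ≠ t} := by
    rw [Fintype.card_subtype_compl, Fintype.card_subtype_eq, hn]
  rw [hcard]
  obtain ⟨q, hq, ⟨e⟩⟩ := exists_attachTreeIso G u hT t rfl
  let f := attachPathIso G u (Fintype.card {x : VT // x ≠ t})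
  have hcmp := parentGraph_compare (u := u) hq hα0 hα1 hconn hρ
  rw [← rhoAlpha_congr α e, ← rhoAlpha_congr α f] at hcmp
  refine ⟨hcmp.1, fun h => ?_, fun ⟨g⟩ => rhoAlpha_congr α g⟩
  obtain rfl := hcmp.2 h
  exact ⟨e.trans f.symm⟩
end

section
/- Let G be a graph of order n with diameter at least k, where k ≥ 2. Then the spectral radius of the signless Laplacian of G satisfies ρ(Q(G)) ≤ ρ(Q(B_{n−k+2,⌊k/2⌋,⌈k/2⌉})), with equality if and only if G is isomorphic to B_{n−k+2,⌊k/2⌋,⌈k/2⌉}. -/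
/-- The bug graph `B_{p,q,r}`: the complete graph `K_p` minus an edge `{u,v}`, with a
path on `q` vertices attached at `u` and a path on `r` vertices attached at `v`
(attaching means identifying one end of the path with the root, so `B_{p,q,r}` has
`p+q+r-2` vertices). Vertices `0,…,q-1` form the first path (with `u = q-1`),
vertices `q-1,…,q+p-2` form the clique with the edge `{q-1, q+p-2}` removed, and
vertices `q+p-2,…,p+q+r-3` form the second path (with `v = q+p-2`). -/
def bugGraph (p q r : ℕ) : SimpleGraph (Fin (p + q + r - 2)) :=
  SimpleGraph.fromRel (fun i j =>
    (i.val + 1 = j.val ∧ j.val ≤ q - 1) ∨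
    (q - 1 ≤ i.val ∧ i.val ≤ q + p - 2 ∧ q - 1 ≤ j.val ∧ j.val ≤ q + p - 2 ∧
      ¬(i.val = q - 1 ∧ j.val = q + p - 2) ∧ ¬(j.val = q - 1 ∧ i.val = q + p - 2)) ∨
    (i.val + 1 = j.val ∧ q + p - 2 ≤ i.val))

/-- The spectral radius `ρ(Q(G))` of the signless Laplacian
`Q(G) = A(G) + D(G)` of `G`. -/
noncomputable def rhoQ {V : Type*} [Fintype V] [DecidableEq V]
    (G : SimpleGraph V) : ℝ :=
  letI := Classical.decRel G.Adj
  specRad (G.adjMatrix ℝ + Matrix.diagonal (fun v => (G.degree v : ℝ)))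

/-! ### Rayleigh's principle and the Perron vector -/

open Matrix in
/-- Rayleigh's principle for `specRad`. -/
theorem specRad_rayleigh {n : Type*} [Fintype n] [DecidableEq n] [Nonempty n]
    (M : Matrix n n ℝ) (hM : M.IsHermitian) :
    (∀ x : n → ℝ, x ⬝ᵥ M *ᵥ x ≤ specRad M * (x ⬝ᵥ x)) ∧
    (∀ x : n → ℝ, x ⬝ᵥ M *ᵥ x = specRad M * (x ⬝ᵥ x) → M *ᵥ x = specRad M • x) ∧
    ∃ x : n → ℝ, x ≠ 0 ∧ x ⬝ᵥ M *ᵥ x = specRad M * (x ⬝ᵥ x) := by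
  have hcont : Continuous fun x : n → ℝ => x ⬝ᵥ M *ᵥ x := by
    simp only [dotProduct, mulVec]; fun_prop
  have hcont2 : Continuous fun x : n → ℝ => x ⬝ᵥ x := by
    simp only [dotProduct]; fun_prop
  have hpos : ∀ x : n → ℝ, x ≠ 0 → 0 < x ⬝ᵥ x := by
    intro x hx
    have h0 : 0 ≤ x ⬝ᵥ x := by
      simp only [dotProduct]; exact Finset.sum_nonneg fun i _ => mul_self_nonneg _
    exact lt_of_le_of_ne h0 fun h => hx (dotProduct_self_eq_zero.mp h.symm)
  -- the unit sphere is compact, so the quadratic form attains its maximum there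
  have hcomp : IsCompact {x : n → ℝ | x ⬝ᵥ x = 1} := by
    refine Metric.isCompact_of_isClosed_isBounded (isClosed_eq hcont2 continuous_const) ?_
    refine (Metric.isBounded_closedBall (x := (0 : n → ℝ)) (r := 1)).subset ?_
    intro x hx
    rw [mem_closedBall_zero_iff, pi_norm_le_iff_of_nonneg zero_le_one]
    intro i
    rw [Real.norm_eq_abs, ← sq_le_one_iff_abs_le_one]
    have : x i * x i ≤ ∑ j, x j * x j :=
      Finset.single_le_sum (f := fun j => x j * x j) (fun j _ => mul_self_nonneg _)
        (Finset.mem_univ i)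
    have hx' : ∑ j, x j * x j = 1 := hx
    nlinarith
  obtain ⟨i0⟩ := ‹Nonempty n›
  obtain ⟨y, hy, hmax⟩ := hcomp.exists_isMaxOn
    ⟨Pi.single i0 1, by simp⟩ hcont.continuousOn
  set ρ := y ⬝ᵥ M *ᵥ y with hρ
  have hle : ∀ x : n → ℝ, x ⬝ᵥ M *ᵥ x ≤ ρ * (x ⬝ᵥ x) := by
    intro x
    by_cases hx : x = 0
    · simp [hx]
    have hp := hpos x hx
    set s := Real.sqrt (x ⬝ᵥ x) with hs
    have hs2 : s * s = x ⬝ᵥ x := Real.mul_self_sqrt hp.le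
    have hs0 : 0 < s := Real.sqrt_pos.mpr hp
    have hmem : (s⁻¹ • x) ∈ {x : n → ℝ | x ⬝ᵥ x = 1} := by
      simp only [Set.mem_ofPred_eq, smul_dotProduct, dotProduct_smul, smul_eq_mul, ← hs2]
      field_simp
    have h := hmax hmem
    simp only [Set.mem_ofPred_eq, mulVec_smul, smul_dotProduct, dotProduct_smul,
      smul_eq_mul] at h
    rw [← hs2]
    have h2 := mul_le_mul_of_nonneg_left h (mul_pos hs0 hs0).le
    have h3 : s * s * (s⁻¹ * (s⁻¹ * x ⬝ᵥ M *ᵥ x)) = x ⬝ᵥ M *ᵥ x := by field_simp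
    linarith
  have heq : ∀ x : n → ℝ, x ⬝ᵥ M *ᵥ x = ρ * (x ⬝ᵥ x) → M *ᵥ x = ρ • x := by
    intro x hx
    have hher : (ρ • (1 : Matrix n n ℝ) - M).IsHermitian := by
      refine IsHermitian.sub ?_ hM
      simp [IsHermitian]
    have hquad : ∀ z : n → ℝ, z ⬝ᵥ (ρ • (1 : Matrix n n ℝ) - M) *ᵥ z
        = ρ * (z ⬝ᵥ z) - z ⬝ᵥ M *ᵥ z := by
      intro z
      simp [sub_mulVec, smul_mulVec, dotProduct_sub]
    have hpsd : (ρ • (1 : Matrix n n ℝ) - M).PosSemidef := by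
      refine PosSemidef.of_dotProduct_mulVec_nonneg hher fun z => ?_
      rw [star_trivial, hquad]
      linarith [hle z]
    have h := (hpsd.dotProduct_mulVec_zero_iff x).mp (by rw [star_trivial, hquad, hx, sub_self])
    rw [sub_mulVec, smul_mulVec, one_mulVec, sub_eq_zero] at h
    exact h.symm
  have hy0 : y ≠ 0 := by
    rintro rfl
    simp at hy
  have hyy : y ⬝ᵥ M *ᵥ y = ρ * (y ⬝ᵥ y) := by
    have : y ⬝ᵥ y = 1 := hy
    rw [this, mul_one]
  have hspec : specRad M = ρ := by
    refine IsGreatest.csSup_eq ⟨⟨y, hy0, heq y hyy⟩, ?_⟩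
    rintro t ⟨v, hv, hvt⟩
    have h := hle v
    rw [hvt, dotProduct_smul, smul_eq_mul] at h
    exact le_of_mul_le_mul_right h (hpos v hv)
  rw [hspec]
  exact ⟨hle, heq, y, hy0, hyy⟩

open Classical in
/-- Twice the quadratic form of the signless Laplacian: every edge `uv` contributes
`(x u + x v) ^ 2` once for each orientation. -/
noncomputable def edgeForm {V : Type*} [Fintype V] (G : SimpleGraph V) (x : V → ℝ) : ℝ :=
  ∑ u, ∑ v, if G.Adj u v then (x u + x v) ^ 2 else 0

open Classical in
/-- The signless Laplacian of `G` applied to `x`, evaluated at `u`. -/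
noncomputable def signlessAt {V : Type*} [Fintype V] (G : SimpleGraph V) (x : V → ℝ)
    (u : V) : ℝ :=
  ∑ v, if G.Adj u v then x u + x v else 0

section Rayleigh

variable {V : Type*} [Fintype V] [DecidableEq V] (G : SimpleGraph V)

open Classical Matrix in
theorem rhoQ_rayleigh_aux :
    ∃ M : Matrix V V ℝ, M.IsHermitian ∧ rhoQ G = specRad M ∧
      (∀ x u, (M *ᵥ x) u = signlessAt G x u) ∧
      (∀ x, 2 * (x ⬝ᵥ M *ᵥ x) = edgeForm G x) := by
  let := Classical.decRel G.Adj
  refine ⟨G.adjMatrix ℝ + Matrix.diagonal (fun v => (G.degree v : ℝ)), ?_, rfl, ?_⟩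
  · refine IsHermitian.add ?_ (isHermitian_diagonal _)
    ext i j
    simp [G.adj_comm]
  have h1 : ∀ (x : V → ℝ) (u : V), ((G.adjMatrix ℝ + Matrix.diagonal
      (fun v => (G.degree v : ℝ))) *ᵥ x) u = signlessAt G x u := by
    intro x u
    have hd : (G.degree u : ℝ) = ∑ v, if G.Adj u v then (1 : ℝ) else 0 := by
      rw [Finset.sum_boole, ← SimpleGraph.card_neighborFinset_eq_degree]
      congr 2
      ext v
      simp
    simp only [signlessAt, add_mulVec, Pi.add_apply, mulVec_diagonal]
    rw [hd, Finset.sum_mul]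
    simp only [mulVec, dotProduct, SimpleGraph.adjMatrix_apply]
    rw [← Finset.sum_add_distrib]
    refine Finset.sum_congr rfl fun v _ => ?_
    split_ifs <;> ring
  refine ⟨h1, fun x => ?_⟩
  simp only [dotProduct, h1]
  simp only [signlessAt, edgeForm, Finset.mul_sum]
  have e : ∑ u, ∑ v, (2 * (x u * if G.Adj u v then x u + x v else 0))
      = ∑ u, ∑ v, (x u * if G.Adj u v then x u + x v else 0)
        + ∑ u, ∑ v, (x v * if G.Adj u v then x u + x v else 0) := by
    rw [Finset.sum_comm (f := fun u v => x v * if G.Adj u v then x u + x v else 0)]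
    rw [← Finset.sum_add_distrib]
    refine Finset.sum_congr rfl fun u _ => ?_
    rw [← Finset.sum_add_distrib]
    refine Finset.sum_congr rfl fun v _ => ?_
    simp only [G.adj_comm v u, add_comm (x v)]
    ring
  rw [e, ← Finset.sum_add_distrib]
  refine Finset.sum_congr rfl fun u _ => ?_
  rw [← Finset.sum_add_distrib]
  refine Finset.sum_congr rfl fun v _ => ?_
  split_ifs <;> ring

theorem edgeForm_le [Nonempty V] (x : V → ℝ) :
    edgeForm G x ≤ 2 * rhoQ G * ∑ v, x v ^ 2 := by
  obtain ⟨M, hM, hr, -, h2⟩ := rhoQ_rayleigh_aux G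
  have h := (specRad_rayleigh M hM).1 x
  rw [← h2, hr]
  have e : x ⬝ᵥ x = ∑ v, x v ^ 2 := by simp [dotProduct, sq]
  rw [← e]
  linarith

theorem signlessAt_of_edgeForm_eq [Nonempty V] (x : V → ℝ)
    (hx : edgeForm G x = 2 * rhoQ G * ∑ v, x v ^ 2) (u : V) :
    signlessAt G x u = rhoQ G * x u := by
  obtain ⟨M, hM, hr, h1, h2⟩ := rhoQ_rayleigh_aux G
  have e : x ⬝ᵥ x = ∑ v, x v ^ 2 := by simp [dotProduct, sq]
  rw [← h2, hr, ← e] at hx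
  have h := (specRad_rayleigh M hM).2.1 x (by linarith)
  rw [← h1, h, hr]
  rfl

/-- The Perron vector of a connected graph: a maximiser of the Rayleigh quotient may be
replaced by its absolute value, and the eigenvalue equation spreads a zero entry to all
neighbours. -/
theorem exists_perron (hG : G.Connected) :
    ∃ x : V → ℝ, (∀ v, 0 < x v) ∧ edgeForm G x = 2 * rhoQ G * ∑ v, x v ^ 2 ∧
      ∀ u, signlessAt G x u = rhoQ G * x u := by
  classical
  have := hG.nonempty
  obtain ⟨M, hM, hr, h1, h2⟩ := rhoQ_rayleigh_aux G
  obtain ⟨y, hy0, hy⟩ := (specRad_rayleigh M hM).2.2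
  have e : y ⬝ᵥ y = ∑ v, y v ^ 2 := by simp [dotProduct, sq]
  have hyq : edgeForm G y = 2 * rhoQ G * ∑ v, y v ^ 2 := by
    rw [← h2, hr, ← e, hy]; ring
  set x : V → ℝ := fun v => |y v| with hx
  have hxy : edgeForm G y ≤ edgeForm G x := by
    refine Finset.sum_le_sum fun u _ => Finset.sum_le_sum fun v _ => ?_
    split_ifs
    · rw [← sq_abs]
      exact pow_le_pow_left₀ (abs_nonneg _) (abs_add_le _ _) 2
    · exact le_rfl
  have hxs : ∑ v, x v ^ 2 = ∑ v, y v ^ 2 := by simp [hx]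
  have hxq : edgeForm G x = 2 * rhoQ G * ∑ v, x v ^ 2 :=
    le_antisymm (edgeForm_le G x) (by rw [hxs, ← hyq]; exact hxy)
  have heig := signlessAt_of_edgeForm_eq G x hxq
  have hnn : ∀ v, 0 ≤ x v := fun v => abs_nonneg _
  have hstep : ∀ u v, G.Adj u v → x u = 0 → x v = 0 := by
    intro u v huv hu
    have h := heig u
    rw [hu, mul_zero, signlessAt, Finset.sum_eq_zero_iff_of_nonneg] at h
    · have := h v (Finset.mem_univ v)
      rw [if_pos huv, hu, zero_add] at this
      exact this
    · intro w _
      split_ifs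
      · exact add_nonneg (hnn _) (hnn _)
      · exact le_rfl
  have hwalk : ∀ u v, G.Walk u v → x u = 0 → x v = 0 := by
    intro u v p
    induction p with
    | nil => exact id
    | cons h _ ih => exact fun hu => ih (hstep _ _ h hu)
  refine ⟨x, fun v => lt_of_le_of_ne (hnn v) fun hv => hy0 ?_, hxq, heig⟩
  funext w
  obtain ⟨p⟩ := hG.preconnected v w
  exact abs_eq_zero.mp (hwalk v w p hv.symm)

theorem rhoQ_le_of_iso {W : Type*} [Fintype W] [DecidableEq W] [Nonempty V]
    {H : SimpleGraph W} (e : G ≃g H) : rhoQ G ≤ rhoQ H := by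
  classical
  have : Nonempty W := (e.toEquiv.nonempty_congr).mp inferInstance
  obtain ⟨M, hM, hr, h1, h2⟩ := rhoQ_rayleigh_aux G
  obtain ⟨y, hy0, hy⟩ := (specRad_rayleigh M hM).2.2
  have es : y ⬝ᵥ y = ∑ v, y v ^ 2 := by simp [dotProduct, sq]
  have hyq : edgeForm G y = 2 * rhoQ G * ∑ v, y v ^ 2 := by
    rw [← h2, hr, ← es, hy]; ring
  have hpos : 0 < ∑ v, y v ^ 2 := by
    obtain ⟨v, hv⟩ := Function.ne_iff.mp hy0
    exact Finset.sum_pos' (fun _ _ => sq_nonneg _) ⟨v, Finset.mem_univ v, by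
      have : y v ≠ 0 := hv
      positivity⟩
  have h := edgeForm_le H (fun w => y (e.symm w))
  have e1 : ∑ w, (y (e.symm w)) ^ 2 = ∑ v, y v ^ 2 :=
    Equiv.sum_comp e.symm.toEquiv fun v => y v ^ 2
  have e2 : edgeForm H (fun w => y (e.symm w)) = edgeForm G y := by
    rw [edgeForm, edgeForm, ← Equiv.sum_comp e.toEquiv]
    refine Finset.sum_congr rfl fun u _ => ?_
    rw [← Equiv.sum_comp e.toEquiv]
    refine Finset.sum_congr rfl fun v _ => ?_
    have hadj : H.Adj (e u) (e v) ↔ G.Adj u v := e.map_rel_iff'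
    by_cases huv : G.Adj u v <;> simp [hadj, huv]
  rw [e1, e2, hyq] at h
  have := le_of_mul_le_mul_right h hpos
  linarith

theorem rhoQ_eq_of_iso {W : Type*} [Fintype W] [DecidableEq W] [Nonempty V]
    {H : SimpleGraph W} (e : G ≃g H) : rhoQ G = rhoQ H := by
  have : Nonempty W := (e.toEquiv.nonempty_congr).mp inferInstance
  exact le_antisymm (rhoQ_le_of_iso G e) (rhoQ_le_of_iso H e.symm)

end Rayleigh

/-! ### Window graphs -/

/-- The path `0, …, k` together with a clique on `Fin m` in which the vertex `w` is joined to
the three consecutive path vertices `d w`, `d w + 1`, `d w + 2`. -/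
def windowGraph (k m : ℕ) (d : Fin m → ℕ) : SimpleGraph (Fin (k + 1) ⊕ Fin m) where
  Adj
    | .inl i, .inl j => i.val + 1 = j.val ∨ j.val + 1 = i.val
    | .inl i, .inr w => d w ≤ i.val ∧ i.val ≤ d w + 2
    | .inr w, .inl i => d w ≤ i.val ∧ i.val ≤ d w + 2
    | .inr w, .inr w' => w ≠ w'
  symm := ⟨by
    rintro (i | w) (j | w') h
    · exact Or.symm h
    · exact h
    · exact h
    · exact Ne.symm h⟩
  loopless := ⟨by
    rintro (i | w) h
    · rcases h with h | h <;> omega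
    · exact h rfl⟩

section WindowGraph

variable {k m : ℕ} {d : Fin m → ℕ}

@[simp] theorem windowGraph_inl_inl {i j : Fin (k + 1)} :
    (windowGraph k m d).Adj (.inl i) (.inl j) ↔ i.val + 1 = j.val ∨ j.val + 1 = i.val := Iff.rfl

@[simp] theorem windowGraph_inl_inr {i : Fin (k + 1)} {w : Fin m} :
    (windowGraph k m d).Adj (.inl i) (.inr w) ↔ d w ≤ i.val ∧ i.val ≤ d w + 2 := Iff.rfl

@[simp] theorem windowGraph_inr_inl {i : Fin (k + 1)} {w : Fin m} :
    (windowGraph k m d).Adj (.inr w) (.inl i) ↔ d w ≤ i.val ∧ i.val ≤ d w + 2 := Iff.rfl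

@[simp] theorem windowGraph_inr_inr {w w' : Fin m} :
    (windowGraph k m d).Adj (.inr w) (.inr w') ↔ w ≠ w' := Iff.rfl

theorem windowGraph_connected (hd : ∀ w, d w + 2 ≤ k) : (windowGraph k m d).Connected := by
  have h0 : ∀ i (hi : i < k + 1), (windowGraph k m d).Reachable
      (.inl ⟨0, by omega⟩) (.inl ⟨i, hi⟩) := by
    intro i
    induction i with
    | zero => exact fun _ => SimpleGraph.Reachable.refl _
    | succ i ih =>
      intro hi
      refine (ih (by omega)).trans (SimpleGraph.Adj.reachable ?_)
      simp
  have h1 : ∀ v, (windowGraph k m d).Reachable (.inl ⟨0, by omega⟩) v := by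
    rintro (i | w)
    · exact h0 i.val i.isLt
    · have := hd w
      refine (h0 (d w) (by omega)).trans (SimpleGraph.Adj.reachable ?_)
      simp
  exact (SimpleGraph.connected_iff_exists_forall_reachable _).mpr ⟨_, h1⟩

/-- The vector on the vertices of a window graph with path entries `f` and clique entries `a`. -/
def windowVec (k : ℕ) {m : ℕ} (f : ℕ → ℝ) (a : Fin m → ℝ) : Fin (k + 1) ⊕ Fin m → ℝ :=
  Sum.elim (fun i => f i.val) a

theorem exists_windowVec (x : Fin (k + 1) ⊕ Fin m → ℝ) :
    ∃ f : ℕ → ℝ, ∃ a, x = windowVec k f a := by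
  refine ⟨fun i => if h : i < k + 1 then x (.inl ⟨i, h⟩) else 0, fun w => x (.inr w), ?_⟩
  funext v
  rcases v with i | w
  · change x (.inl i) = if h : i.val < k + 1 then x (.inl ⟨i.val, h⟩) else 0
    rw [dif_pos i.isLt]
  · simp [windowVec]

theorem sum_windowVec_sq (f : ℕ → ℝ) (a : Fin m → ℝ) :
    ∑ v, windowVec k f a v ^ 2 = ∑ i ∈ Finset.range (k + 1), f i ^ 2 + ∑ w, a w ^ 2 := by
  rw [Fintype.sum_sum_type]
  simp only [windowVec, Sum.elim_inl, Sum.elim_inr]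
  rw [Fin.sum_univ_eq_sum_range (fun i => f i ^ 2)]

/-- The sum of `g` over the three vertices of a window. -/
theorem sum_window (g : ℕ → ℝ) (e : ℕ) (he : e + 2 ≤ k) :
    ∑ i : Fin (k + 1), (if e ≤ i.val ∧ i.val ≤ e + 2 then g i.val else 0)
      = g e + g (e + 1) + g (e + 2) := by
  rw [Fin.sum_univ_eq_sum_range (fun i => if e ≤ i ∧ i ≤ e + 2 then g i else 0),
    ← Finset.sum_filter]
  have : (Finset.range (k + 1)).filter (fun i => e ≤ i ∧ i ≤ e + 2) = {e, e + 1, e + 2} := by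
    ext i
    simp only [Finset.mem_filter, Finset.mem_range, Finset.mem_insert, Finset.mem_singleton]
    omega
  rw [this, Finset.sum_insert (by simp), Finset.sum_insert (by simp), Finset.sum_singleton]
  ring

/-- The sum of `g` over the neighbours of `i` on the path. -/
theorem sum_path_nbrs (g : ℕ → ℝ) (i : ℕ) (hi : i ≤ k) :
    ∑ j : Fin (k + 1), (if i + 1 = j.val ∨ j.val + 1 = i then g j.val else 0)
      = (if i < k then g (i + 1) else 0) + (if 0 < i then g (i - 1) else 0) := by
  have h : ∀ j : Fin (k + 1), (if i + 1 = j.val ∨ j.val + 1 = i then g j.val else 0)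
      = (if i + 1 = j.val then g j.val else 0) + (if j.val + 1 = i then g j.val else 0) := by
    intro j
    by_cases h1 : i + 1 = j.val
    · have h2 : ¬ (j.val + 1 = i) := by omega
      simp [h1, h2]
    · simp [h1]
  rw [Finset.sum_congr rfl fun j _ => h j, Finset.sum_add_distrib]
  congr 1
  · rw [Fin.sum_univ_eq_sum_range (fun j => if i + 1 = j then g j else 0), Finset.sum_ite_eq]
    simp
  · by_cases h0 : 0 < i
    · have : ∀ j, (if j + 1 = i then g j else 0) = if i - 1 = j then g j else 0 := by
        intro j
        refine if_congr ?_ rfl rfl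
        omega
      rw [Fin.sum_univ_eq_sum_range (fun j => if j + 1 = i then g j else 0)]
      simp only [this]
      rw [Finset.sum_ite_eq, if_pos (by simp; omega), if_pos h0]
    · rw [if_neg h0]
      refine Finset.sum_eq_zero fun j _ => if_neg ?_
      omega

theorem signlessAt_inl (f : ℕ → ℝ) (a : Fin m → ℝ) (i : ℕ) (hi : i ≤ k) :
    signlessAt (windowGraph k m d) (windowVec k f a) (.inl ⟨i, by omega⟩)
      = (if i < k then f i + f (i + 1) else 0) + (if 0 < i then f i + f (i - 1) else 0)
        + ∑ w, if d w ≤ i ∧ i ≤ d w + 2 then f i + a w else 0 := by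
  rw [signlessAt, Fintype.sum_sum_type, ← sum_path_nbrs (fun j => f i + f j) i hi]
  simp [windowVec]

theorem signlessAt_inr (hd : ∀ w, d w + 2 ≤ k) (f : ℕ → ℝ) (a : Fin m → ℝ) (w : Fin m) :
    signlessAt (windowGraph k m d) (windowVec k f a) (.inr w)
      = 3 * a w + f (d w) + f (d w + 1) + f (d w + 2)
        + (m * a w + ∑ w', a w' - 2 * a w) := by
  rw [signlessAt, Fintype.sum_sum_type]
  have h1 := sum_window (fun j => a w + f j) (d w) (hd w)
  have h2 : ∑ w' : Fin m, (if w ≠ w' then a w + a w' else 0)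
      = m * a w + ∑ w', a w' - 2 * a w := by
    have : ∀ w' : Fin m, (if w ≠ w' then a w + a w' else 0)
        = a w + a w' - (if w = w' then a w + a w' else 0) := by
      intro w'
      by_cases h : w = w' <;> simp [h]
    rw [Finset.sum_congr rfl fun w' _ => this w', Finset.sum_sub_distrib, Finset.sum_ite_eq,
      Finset.sum_add_distrib]
    simp
    ring
  rw [← h2]
  simp only [windowGraph_inr_inl, windowGraph_inr_inr, windowVec, Sum.elim_inl, Sum.elim_inr]
  have h3 : 3 * a w + f (d w) + f (d w + 1) + f (d w + 2)
    = a w + f (d w) + (a w + f (d w + 1)) + (a w + f (d w + 2)) := by ring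
  rw [h3, ← h1]

theorem edgeForm_windowGraph (hd : ∀ w, d w + 2 ≤ k) (f : ℕ → ℝ) (a : Fin m → ℝ) :
    edgeForm (windowGraph k m d) (windowVec k f a)
      = 2 * ∑ i ∈ Finset.range k, (f i + f (i + 1)) ^ 2
        + 2 * ∑ w, ((a w + f (d w)) ^ 2 + (a w + f (d w + 1)) ^ 2 + (a w + f (d w + 2)) ^ 2)
        + (∑ w, ∑ w', (a w + a w') ^ 2 - 4 * ∑ w, a w ^ 2) := by
  have hcross : ∑ w : Fin m, ∑ i : Fin (k + 1),
      (if d w ≤ i.val ∧ i.val ≤ d w + 2 then (a w + f i.val) ^ 2 else 0)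
      = ∑ w, ((a w + f (d w)) ^ 2 + (a w + f (d w + 1)) ^ 2 + (a w + f (d w + 2)) ^ 2) :=
    Finset.sum_congr rfl fun w _ => sum_window (fun i => (a w + f i) ^ 2) (d w) (hd w)
  have hcross2 : ∑ i : Fin (k + 1), ∑ w : Fin m,
      (if d w ≤ i.val ∧ i.val ≤ d w + 2 then (f i.val + a w) ^ 2 else 0)
      = ∑ w, ((a w + f (d w)) ^ 2 + (a w + f (d w + 1)) ^ 2 + (a w + f (d w + 2)) ^ 2) := by
    rw [Finset.sum_comm, ← hcross]
    simp only [add_comm]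
  have hclique : ∑ w : Fin m, ∑ w' : Fin m, (if w ≠ w' then (a w + a w') ^ 2 else 0)
      = ∑ w, ∑ w', (a w + a w') ^ 2 - 4 * ∑ w, a w ^ 2 := by
    rw [Finset.mul_sum, ← Finset.sum_sub_distrib]
    refine Finset.sum_congr rfl fun w _ => ?_
    have : ∀ w' : Fin m, (if w ≠ w' then (a w + a w') ^ 2 else 0)
        = (a w + a w') ^ 2 - (if w = w' then (a w + a w') ^ 2 else 0) := by
      intro w'
      by_cases h : w = w' <;> simp [h]
    rw [Finset.sum_congr rfl fun w' _ => this w', Finset.sum_sub_distrib, Finset.sum_ite_eq]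
    simp
    ring
  have hpath : ∑ i : Fin (k + 1), ∑ j : Fin (k + 1),
      (if i.val + 1 = j.val ∨ j.val + 1 = i.val then (f i.val + f j.val) ^ 2 else 0)
      = 2 * ∑ i ∈ Finset.range k, (f i + f (i + 1)) ^ 2 := by
    rw [Finset.sum_congr rfl fun i _ =>
      sum_path_nbrs (fun j => (f i.val + f j) ^ 2) i.val (by omega), Finset.sum_add_distrib, two_mul]
    congr 1
    · rw [Fin.sum_univ_eq_sum_range (fun i => if i < k then (f i + f (i + 1)) ^ 2 else 0),
        Finset.sum_range_succ, if_neg (lt_irrefl k), add_zero]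
      exact Finset.sum_congr rfl fun i hi => if_pos (Finset.mem_range.mp hi)
    · rw [Fin.sum_univ_eq_sum_range (fun i => if 0 < i then (f i + f (i - 1)) ^ 2 else 0),
        Finset.sum_range_succ']
      simp [add_comm]
  generalize (∑ w, ((a w + f (d w)) ^ 2 + (a w + f (d w + 1)) ^ 2 + (a w + f (d w + 2)) ^ 2)) = T
    at hcross hcross2 ⊢
  rw [edgeForm, Fintype.sum_sum_type]
  simp only [Fintype.sum_sum_type, Finset.sum_add_distrib, windowGraph_inr_inl,
    windowGraph_inr_inr, windowGraph_inl_inl, windowGraph_inl_inr, windowVec, Sum.elim_inl,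
    Sum.elim_inr]
  rw [hcross2, hcross, hpath]
  linarith

/-- Reversing the path. -/
theorem windowGraph_reflect (k m e : ℕ) (he : e + 2 ≤ k) :
    Nonempty (windowGraph k m (fun _ => e) ≃g windowGraph k m (fun _ => k - 2 - e)) := by
  refine ⟨⟨Equiv.sumCongr Fin.revPerm (Equiv.refl _), ?_⟩⟩
  rintro (i | w) (j | w')
  · simp only [Equiv.sumCongr_apply, Sum.map_inl, windowGraph_inl_inl, Fin.revPerm_apply,
      Fin.val_rev]
    omega
  · simp only [Equiv.sumCongr_apply, Sum.map_inl, Sum.map_inr, windowGraph_inl_inr,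
      Fin.revPerm_apply, Fin.val_rev]
    omega
  · simp only [Equiv.sumCongr_apply, Sum.map_inl, Sum.map_inr, windowGraph_inr_inl,
      Fin.revPerm_apply, Fin.val_rev]
    omega
  · simp

end WindowGraph

/-! ### Moving the window to the middle -/

/-- The entries of a `ρ`-eigenvector along a pendant path, read from the pendant vertex and
normalised to be `1` there; here `α = ρ - 2`. -/
def tailSeq (α : ℝ) : ℕ → ℝ
  | 0 => 1
  | 1 => α + 1
  | n + 2 => α * tailSeq α (n + 1) - tailSeq α n

theorem tailSeq_growth {α : ℝ} (hα : 3 ≤ α) (j : ℕ) :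
    0 < tailSeq α j ∧ 5 / 2 * tailSeq α j ≤ tailSeq α (j + 1) := by
  induction j with
  | zero =>
    simp only [tailSeq]
    constructor <;> linarith
  | succ j ih =>
    obtain ⟨h1, h2⟩ := ih
    refine ⟨by linarith, ?_⟩
    have h3 : tailSeq α (j + 2) = α * tailSeq α (j + 1) - tailSeq α j := rfl
    nlinarith

theorem tailSeq_mono {α : ℝ} (hα : 3 ≤ α) : Monotone (tailSeq α) :=
  monotone_nat_of_le_succ fun j => by
    obtain ⟨h1, h2⟩ := tailSeq_growth hα j
    linarith

theorem tailSeq_two {α : ℝ} (hα : 3 ≤ α) (j : ℕ) :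
    3 / 2 * ((α + 1) * tailSeq α j) ≤ tailSeq α (j + 2) := by
  obtain ⟨h1, h2⟩ := tailSeq_growth hα j
  have h3 : tailSeq α (j + 2) = α * tailSeq α (j + 1) - tailSeq α j := rfl
  have h4 : α * (5 / 2 * tailSeq α j) ≤ α * tailSeq α (j + 1) :=
    mul_le_mul_of_nonneg_left h2 (by linarith)
  nlinarith

theorem eq_mul_tailSeq {α : ℝ} {s : ℕ → ℝ} {L : ℕ} (h1 : 2 ≤ L → s 1 = (α + 1) * s 0)
    (h2 : ∀ j, j + 2 < L → s (j + 2) = α * s (j + 1) - s j) :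
    ∀ j, j < L → s j = s 0 * tailSeq α j := by
  intro j
  induction j using Nat.strong_induction_on with
  | _ j ih =>
    intro hj
    match j, ih, hj with
    | 0, _, _ => simp [tailSeq]
    | 1, _, hj => rw [h1 hj, tailSeq]; ring
    | j + 2, ih, hj =>
      rw [h2 j hj, ih (j + 1) (by omega) (by omega), ih j (by omega) (by omega), tailSeq]
      ring

/-- Two pendant paths `s`, `t` of lengths `q` and `r ≥ q + 2`, hanging on the same core (whose
entries add up to `σ`): the end vertex of the short path carries more weight than the last but
one vertex of the long path. -/
theorem tail_compare {α β σ : ℝ} (hα : 3 ≤ α) (hβ : 2 ≤ β) {q r : ℕ} (hq : 1 ≤ q)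
    (hr : q + 2 ≤ r) {s t : ℕ → ℝ} (hs0 : 0 < s 0) (ht0 : 0 < t 0)
    (hs1 : 2 ≤ q → s 1 = (α + 1) * s 0)
    (hs2 : ∀ j, j + 2 < q → s (j + 2) = α * s (j + 1) - s j)
    (ht1 : t 1 = (α + 1) * t 0)
    (ht2 : ∀ j, j + 2 < r → t (j + 2) = α * t (j + 1) - t j)
    (hs3 : q = 1 → (β + 1) * s 0 = σ)
    (hs4 : 2 ≤ q → β * s (q - 1) = σ + s (q - 2))
    (ht3 : β * t (r - 1) = σ + t (r - 2)) : t 1 < s 0 := by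
  have hs := eq_mul_tailSeq hs1 hs2
  have ht := eq_mul_tailSeq (fun _ => ht1) ht2
  by_contra hcon
  rw [not_lt] at hcon
  have hr1 : r - 1 = (r - 2) + 1 := by omega
  -- along the long path the entries drop by a factor of at least `5 / 2`
  have h1 : 5 / 2 * t (r - 2) ≤ t (r - 1) := by
    rw [ht (r - 2) (by omega), ht (r - 1) (by omega), hr1]
    have := mul_le_mul_of_nonneg_left (tailSeq_growth hα (r - 2)).2 ht0.le
    linarith
  have h2 : t (q + 1) ≤ t (r - 1) := by
    rw [ht (q + 1) (by omega), ht (r - 1) (by omega)]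
    exact mul_le_mul_of_nonneg_left (tailSeq_mono hα (by omega)) ht0.le
  rcases Nat.lt_or_ge 1 q with hq2 | hq1
  · have h3 : 3 / 2 * s (q - 1) ≤ t (q + 1) := by
      rw [hs (q - 1) (by omega), ht (q + 1) (by omega)]
      have h4 := mul_le_mul_of_nonneg_left (tailSeq_two hα (q - 1)) ht0.le
      rw [show q - 1 + 2 = q + 1 by omega] at h4
      have h5 := mul_le_mul_of_nonneg_right hcon (tailSeq_growth hα (q - 1)).1.le
      rw [ht1] at h5
      linarith
    have h6 : 0 < s (q - 2) := by
      rw [hs (q - 2) (by omega)]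
      exact mul_pos hs0 (tailSeq_growth hα _).1
    have h7 : 0 < s (q - 1) := by
      rw [hs (q - 1) (by omega)]
      exact mul_pos hs0 (tailSeq_growth hα _).1
    have h8 := hs4 hq2
    have h9 : (β - 2 / 5) * (3 / 2 * s (q - 1)) ≤ (β - 2 / 5) * t (r - 1) :=
      mul_le_mul_of_nonneg_left (h3.trans h2) (by linarith)
    nlinarith
  · obtain rfl : q = 1 := by omega
    have h3 : 2 * s 0 ≤ t 2 := by
      rw [ht2 0 (by omega), zero_add, ht1]
      rw [ht1] at hcon
      nlinarith
    have h8 := hs3 rfl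
    have h9 : (β - 2 / 5) * (2 * s 0) ≤ (β - 2 / 5) * t (r - 1) :=
      mul_le_mul_of_nonneg_left (h3.trans h2) (by linarith)
    nlinarith

/-- Moving the window one step towards the middle of the path increases the spectral radius.
The Perron vector of the old graph is transported to the new one by moving the last vertex of the
long pendant path to the end of the short one. -/
theorem rhoQ_shift {k m e : ℕ} (hm : 1 ≤ m) (he : 2 * e + 4 ≤ k) :
    rhoQ (windowGraph k m fun _ => e) < rhoQ (windowGraph k m fun _ => e + 1) := by
  obtain ⟨x, hpos, hform, heig⟩ := exists_perron (windowGraph k m fun _ => e)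
    (windowGraph_connected fun _ => by omega)
  set ρ := rhoQ (windowGraph k m fun _ => e) with hρ
  obtain ⟨f, a, rfl⟩ := exists_windowVec x
  have hf : ∀ i, i ≤ k → 0 < f i := fun i hi => hpos (.inl ⟨i, by omega⟩)
  have ha : ∀ w, 0 < a w := fun w => hpos (.inr w)
  set A := ∑ w, a w with hA
  have hA0 : 0 ≤ A := Finset.sum_nonneg fun w _ => (ha w).le
  have hpath : ∀ i, i ≤ k → (if i < k then f i + f (i + 1) else 0)
      + (if 0 < i then f i + f (i - 1) else 0)
      + (if e ≤ i ∧ i ≤ e + 2 then m * f i + A else 0) = ρ * f i := by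
    intro i hi
    have h := heig (.inl ⟨i, by omega⟩)
    rw [signlessAt_inl f a i hi] at h
    have h2 : ∑ w, (if e ≤ i ∧ i ≤ e + 2 then f i + a w else 0)
        = if e ≤ i ∧ i ≤ e + 2 then m * f i + A else 0 := by
      split_ifs
      · simp [Finset.sum_add_distrib, hA]
      · simp
    rw [h2] at h
    exact h
  have hm' : (1 : ℝ) ≤ m := by exact_mod_cast hm
  set σ := A + f (e + 1) with hσ
  have hσ0 : 0 < σ := by linarith [hf (e + 1) (by omega)]
  -- the eigenvalue equations, vertex by vertex
  have eq_in : ∀ i, 0 < i → i < k → (i < e ∨ e + 2 < i) →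
      (ρ - 2) * f i = f (i + 1) + f (i - 1) := by
    intro i h0 h1 h2
    have h := hpath i h1.le
    rw [if_pos h1, if_pos h0, if_neg (by omega)] at h
    linarith
  have eq_first : 0 < e → (ρ - 1) * f 0 = f 1 := by
    intro h0
    have h := hpath 0 (by omega)
    rw [if_pos (by omega), if_neg (by omega), if_neg (by omega)] at h
    linarith
  have eq_last : (ρ - 1) * f k = f (k - 1) := by
    have h := hpath k le_rfl
    rw [if_neg (by omega), if_pos (by omega), if_neg (by omega)] at h
    linarith
  have eq_left0 : e = 0 → (ρ - m - 1) * f e = σ := by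
    intro h0
    have h := hpath e (by omega)
    rw [if_pos (by omega), if_neg (by omega), if_pos (by omega)] at h
    linarith
  have eq_left : 0 < e → (ρ - m - 2) * f e = σ + f (e - 1) := by
    intro h0
    have h := hpath e (by omega)
    rw [if_pos (by omega), if_pos (by omega), if_pos (by omega)] at h
    linarith
  have eq_right : (ρ - m - 2) * f (e + 2) = σ + f (e + 3) := by
    have h := hpath (e + 2) (by omega)
    rw [if_pos (by omega), if_pos (by omega), if_pos (by omega),
      show e + 2 - 1 = e + 1 by omega] at h
    linarith
  have eq_core : (ρ - 2 * m - 2) * σ = (m + 1) * (f e + f (e + 2)) := by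
    have h := hpath (e + 1) (by omega)
    rw [if_pos (by omega), if_pos (by omega), if_pos (by omega),
      show e + 1 - 1 = e by omega] at h
    have h2 : ∑ w, ρ * a w = ∑ w, (3 * a w + f e + f (e + 1) + f (e + 2)
        + (m * a w + A - 2 * a w)) := by
      refine Finset.sum_congr rfl fun w _ => ?_
      have := heig (.inr w)
      rw [signlessAt_inr (fun _ => by omega)] at this
      exact this.symm
    simp only [Finset.sum_add_distrib, Finset.sum_sub_distrib, ← Finset.mul_sum,
      Finset.sum_const, Finset.card_univ, Fintype.card_fin, nsmul_eq_mul, ← hA] at h2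
    rw [hσ]
    rw [show e + 1 + 1 = e + 2 by omega] at h
    linarith
  have hfe := hf e (by omega)
  have hfe2 := hf (e + 2) (by omega)
  have low_left : σ ≤ (ρ - m - 1) * f e := by
    rcases Nat.eq_zero_or_pos e with h0 | h0
    · exact (eq_left0 h0).ge
    · linarith [eq_left h0, hf (e - 1) (by omega)]
  have low_right : σ ≤ (ρ - m - 1) * f (e + 2) := by
    linarith [hf (e + 3) (by omega)]
  have hρ3 : 2 * m + 3 ≤ ρ := by
    by_contra hcon
    rw [not_le] at hcon
    have hδ : 0 < ρ - 2 * m - 2 := by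
      by_contra hn
      have : (ρ - 2 * m - 2) * σ ≤ 0 := mul_nonpos_of_nonpos_of_nonneg (not_lt.mp hn) hσ0.le
      have : 0 < (m + 1) * (f e + f (e + 2)) := by positivity
      linarith
    have h1 : 2 * σ ≤ (ρ - m - 1) * (f e + f (e + 2)) := by linarith
    have h2 : (m + 1) * (2 * σ) ≤ (m + 1) * ((ρ - m - 1) * (f e + f (e + 2))) :=
      mul_le_mul_of_nonneg_left h1 (by linarith)
    have h3 : (2 * (m + 1)) * σ ≤ ((ρ - m - 1) * (ρ - 2 * m - 2)) * σ := by
      have : ((ρ - m - 1) * (ρ - 2 * m - 2)) * σ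
          = (ρ - m - 1) * ((m + 1) * (f e + f (e + 2))) := by rw [← eq_core]; ring
      rw [this]
      linarith
    have h4 := le_of_mul_le_mul_right h3 hσ0
    nlinarith
  have hkey : f (k - 1) < f 0 := by
    refine tail_compare (α := ρ - 2) (β := ρ - m - 2) (σ := σ) (q := e + 1) (r := k - (e + 1))
      (s := f) (t := fun j => f (k - j)) (by linarith) (by linarith) (by omega) (by omega)
      (hf 0 (by omega)) (hf k le_rfl) ?_ ?_ ?_ ?_ ?_ ?_ ?_
    · intro h
      rw [← eq_first (by omega)]; ring
    · intro j hj
      have := eq_in (j + 1) (by omega) (by omega) (by omega)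
      rw [this]
      simp
    · change f (k - 1) = _ * f k
      rw [← eq_last]; ring
    · intro j hj
      have := eq_in (k - (j + 1)) (by omega) (by omega) (by omega)
      simp only [this]
      rw [show k - (j + 1) + 1 = k - j by omega, show k - (j + 1) - 1 = k - (j + 2) by omega]
      ring
    · intro h
      obtain rfl : e = 0 := by omega
      rw [← eq_left0 rfl]; ring
    · intro h
      exact eq_left (by omega)
    · rw [show k - (k - (e + 1) - 1) = e + 2 by omega, show k - (k - (e + 1) - 2) = e + 3 by omega]
      exact eq_right
  -- the transported vector
  obtain ⟨K, rfl⟩ : ∃ K, k = K + 1 := ⟨k - 1, by omega⟩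
  set g : ℕ → ℝ := fun i => if i = 0 then f (K + 1) else f (i - 1) with hg
  have hg0 : g 0 = f (K + 1) := rfl
  have hgs : ∀ i, g (i + 1) = f i := fun i => rfl
  have hle := edgeForm_le (windowGraph (K + 1) m fun _ => e + 1) (windowVec (K + 1) g a)
  have hnorm : ∑ v, windowVec (K + 1) g a v ^ 2 = ∑ v, windowVec (K + 1) f a v ^ 2 := by
    rw [sum_windowVec_sq, sum_windowVec_sq, Finset.sum_range_succ', Finset.sum_range_succ _ (K + 1)]
    simp only [hgs, hg0]
  have hlt : edgeForm (windowGraph (K + 1) m fun _ => e) (windowVec (K + 1) f a)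
      < edgeForm (windowGraph (K + 1) m fun _ => e + 1) (windowVec (K + 1) g a) := by
    rw [edgeForm_windowGraph (fun _ => by omega), edgeForm_windowGraph (fun _ => by omega),
      Finset.sum_range_succ (fun i => (f i + f (i + 1)) ^ 2) K,
      Finset.sum_range_succ' (fun i => (g i + g (i + 1)) ^ 2) K]
    simp only [show e + 1 + 1 = (e + 1) + 1 from rfl, show e + 1 + 2 = (e + 2) + 1 from rfl,
      hgs, hg0]
    simp only [Nat.add_sub_cancel] at hkey
    have h0 := hf K (by omega)
    have h1 := hf (K + 1) le_rfl
    nlinarith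
  rw [hform, hnorm.symm] at hlt
  have hN : 0 < ∑ v, windowVec (K + 1) g a v ^ 2 := by
    rw [hnorm]
    exact Finset.sum_pos (fun v _ => pow_pos (hpos v) 2) Finset.univ_nonempty
  have := lt_of_mul_lt_mul_right (hlt.trans_le hle) hN.le
  linarith

/-- Among single-window graphs, the central one maximises the spectral radius, uniquely up to
isomorphism. -/
theorem rhoQ_window_le {k m e : ℕ} (hm : 1 ≤ m) (he : e + 2 ≤ k) :
    rhoQ (windowGraph k m fun _ => e) ≤ rhoQ (windowGraph k m fun _ => k / 2 - 1) ∧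
    (rhoQ (windowGraph k m fun _ => e) = rhoQ (windowGraph k m fun _ => k / 2 - 1) →
      Nonempty (windowGraph k m (fun _ => e) ≃g windowGraph k m (fun _ => k / 2 - 1))) := by
  have hlt : ∀ j i, i + j + 1 = k / 2 - 1 →
      rhoQ (windowGraph k m fun _ => i) < rhoQ (windowGraph k m fun _ => k / 2 - 1) := by
    intro j
    induction j with
    | zero =>
      intro i hi
      rw [← hi]
      exact rhoQ_shift hm (by omega)
    | succ j ih =>
      intro i hi
      exact (rhoQ_shift hm (by omega)).trans (ih (i + 1) (by omega))
  have hcase : ∀ i, i ≤ k / 2 - 1 →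
      rhoQ (windowGraph k m fun _ => i) ≤ rhoQ (windowGraph k m fun _ => k / 2 - 1) ∧
      (rhoQ (windowGraph k m fun _ => i) = rhoQ (windowGraph k m fun _ => k / 2 - 1) →
        Nonempty (windowGraph k m (fun _ => i) ≃g windowGraph k m (fun _ => k / 2 - 1))) := by
    intro i hi
    rcases Nat.lt_or_ge i (k / 2 - 1) with h | h
    · have := hlt (k / 2 - 1 - i - 1) i (by omega)
      exact ⟨this.le, fun h' => absurd h' this.ne⟩
    · obtain rfl : i = k / 2 - 1 := by omega
      exact ⟨le_rfl, fun _ => ⟨SimpleGraph.Iso.refl⟩⟩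
  rcases Nat.lt_or_ge (k / 2 - 1) e with h | h
  · obtain ⟨φ⟩ := windowGraph_reflect k m e he
    rw [rhoQ_eq_of_iso _ φ]
    obtain ⟨h1, h2⟩ := hcase (k - 2 - e) (by omega)
    refine ⟨h1, fun h' => ?_⟩
    obtain ⟨ψ⟩ := h2 h'
    exact ⟨φ.trans ψ⟩
  · exact hcase e h

/-! ### Symmetrisation -/

/-- Symmetrisation. Give every clique vertex the entry and the window of one fixed clique vertex
`i`, and average over `i`. Since `(s + t) ^ 2 ≤ 2 * s ^ 2 + 2 * t ^ 2` inside the clique, the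
averaged form is at least the original one; the norms average exactly. -/
theorem sum_symmetrised {k m : ℕ} {d : Fin m → ℕ} (hd : ∀ w, d w + 2 ≤ k) (ρ : ℝ)
    (f : ℕ → ℝ) (a : Fin m → ℝ) :
    m * (edgeForm (windowGraph k m d) (windowVec k f a)
        - 2 * ρ * ∑ v, windowVec k f a v ^ 2)
      ≤ ∑ i, (edgeForm (windowGraph k m fun _ => d i) (windowVec k f fun _ => a i)
        - 2 * ρ * ∑ v, windowVec k f (fun _ : Fin m => a i) v ^ 2) := by
  have hi : ∀ i, edgeForm (windowGraph k m fun _ => d i) (windowVec k f fun _ => a i)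
        - 2 * ρ * ∑ v, windowVec k f (fun _ : Fin m => a i) v ^ 2
      = (2 * ∑ i ∈ Finset.range k, (f i + f (i + 1)) ^ 2
          - 2 * ρ * ∑ i ∈ Finset.range (k + 1), f i ^ 2)
        + 2 * m * ((a i + f (d i)) ^ 2 + (a i + f (d i + 1)) ^ 2 + (a i + f (d i + 2)) ^ 2)
        + (4 * m * m - 4 * m - 2 * ρ * m) * a i ^ 2 := by
    intro i
    rw [edgeForm_windowGraph (fun _ => hd i), sum_windowVec_sq]
    simp only [Finset.sum_const, Finset.card_univ, Fintype.card_fin, nsmul_eq_mul]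
    ring
  rw [Finset.sum_congr rfl fun i _ => hi i, edgeForm_windowGraph hd, sum_windowVec_sq]
  have hcl : ∑ w, ∑ w', (a w + a w') ^ 2 ≤ 4 * m * ∑ w, a w ^ 2 := by
    have h1 : ∑ w, ∑ w', (a w + a w') ^ 2 ≤ ∑ w, ∑ w', (2 * a w ^ 2 + 2 * a w' ^ 2) :=
      Finset.sum_le_sum fun w _ => Finset.sum_le_sum fun w' _ => by
        nlinarith [sq_nonneg (a w - a w')]
    refine h1.trans (le_of_eq ?_)
    simp only [Finset.sum_add_distrib, Finset.sum_const, Finset.card_univ, Fintype.card_fin,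
      nsmul_eq_mul, ← Finset.mul_sum]
    ring
  simp only [Finset.sum_add_distrib, ← Finset.mul_sum, Finset.sum_const, Finset.card_univ,
    Fintype.card_fin, nsmul_eq_mul]
  have := mul_le_mul_of_nonneg_left hcl (Nat.cast_nonneg (α := ℝ) m)
  linarith

theorem edgeForm_mono {V : Type*} [Fintype V] {G H : SimpleGraph V} (h : G ≤ H) (x : V → ℝ) :
    edgeForm G x ≤ edgeForm H x := by
  refine Finset.sum_le_sum fun u _ => Finset.sum_le_sum fun v _ => ?_
  by_cases h1 : G.Adj u v
  · rw [if_pos h1, if_pos (h h1)]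
  · rw [if_neg h1]
    split_ifs
    · positivity
    · exact le_rfl

theorem eq_of_edgeForm_eq {V : Type*} [Fintype V] {G H : SimpleGraph V} (h : G ≤ H) (x : V → ℝ)
    (hx : ∀ v, 0 < x v) (he : edgeForm G x = edgeForm H x) : G = H := by
  classical
  refine le_antisymm h fun u v huv => ?_
  by_contra hn
  refine (ne_of_lt ?_) he
  have hterm : ∀ u v, (if G.Adj u v then (x u + x v) ^ 2 else 0)
      ≤ if H.Adj u v then (x u + x v) ^ 2 else 0 := by
    intro u v
    by_cases h1 : G.Adj u v
    · rw [if_pos h1, if_pos (h h1)]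
    · rw [if_neg h1]
      split_ifs
      · positivity
      · exact le_rfl
  refine Finset.sum_lt_sum (fun u _ => Finset.sum_le_sum fun v _ => ?_)
    ⟨u, Finset.mem_univ u, Finset.sum_lt_sum (fun v _ => ?_) ⟨v, Finset.mem_univ v, ?_⟩⟩
  · convert hterm u v
  · convert hterm u v
  · rw [if_neg hn, if_pos huv]
    have := hx u
    have := hx v
    positivity

/-- A connected subgraph of a window graph whose spectral radius reaches that of the central
single-window graph is isomorphic to it. -/
theorem iso_of_le_rhoQ {k m : ℕ} {d : Fin m → ℕ} (hm : 1 ≤ m) (hd : ∀ w, d w + 2 ≤ k)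
    {G : SimpleGraph (Fin (k + 1) ⊕ Fin m)} (hconn : G.Connected) (hG : G ≤ windowGraph k m d)
    (hρ : rhoQ (windowGraph k m fun _ => k / 2 - 1) ≤ rhoQ G) :
    Nonempty (G ≃g windowGraph k m fun _ => k / 2 - 1) := by
  obtain ⟨x, hpos, hform, -⟩ := exists_perron G hconn
  set ρ := rhoQ G
  obtain ⟨f, a, rfl⟩ := exists_windowVec x
  have hf : ∀ i, i ≤ k → 0 < f i := fun i hi => hpos (.inl ⟨i, by omega⟩)
  have ha : ∀ w, 0 < a w := fun w => hpos (.inr w)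
  have hmono := edgeForm_mono hG (windowVec k f a)
  have hsym := sum_symmetrised hd ρ f a
  have hm' : (0 : ℝ) < m := by exact_mod_cast hm
  have hmax := fun i => rhoQ_window_le hm (hd i)
  have hN : ∀ i, 0 < ∑ v, windowVec k f (fun _ : Fin m => a i) v ^ 2 := by
    intro i
    refine Finset.sum_pos (fun v _ => pow_pos ?_ 2) Finset.univ_nonempty
    rcases v with j | w
    · exact hf j (by omega)
    · exact ha i
  have hE : ∀ i, edgeForm (windowGraph k m fun _ => d i) (windowVec k f fun _ => a i)
        - 2 * ρ * ∑ v, windowVec k f (fun _ : Fin m => a i) v ^ 2 ≤ 0 := by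
    intro i
    have h1 := edgeForm_le (windowGraph k m fun _ => d i) (windowVec k f fun _ => a i)
    have h2 := mul_le_mul_of_nonneg_right ((hmax i).1.trans hρ) (hN i).le
    linarith
  have hsum_le := Finset.sum_nonpos fun i (_ : i ∈ Finset.univ) => hE i
  have hge : 0 ≤ edgeForm (windowGraph k m d) (windowVec k f a)
      - 2 * ρ * ∑ v, windowVec k f a v ^ 2 := by linarith
  have hge' := mul_nonneg hm'.le hge
  -- all the inequalities above are equalities
  have hzero : ∀ i, edgeForm (windowGraph k m fun _ => d i) (windowVec k f fun _ => a i)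
        - 2 * ρ * ∑ v, windowVec k f (fun _ : Fin m => a i) v ^ 2 = 0 := by
    intro i
    exact (Finset.sum_eq_zero_iff_of_nonpos fun i _ => hE i).mp
      (le_antisymm hsum_le (hge'.trans hsym)) i (Finset.mem_univ i)
  have hGeq : G = windowGraph k m d := by
    refine eq_of_edgeForm_eq hG _ hpos (le_antisymm hmono ?_)
    have h1 : (m : ℝ) * (edgeForm (windowGraph k m d) (windowVec k f a)
      - 2 * ρ * ∑ v, windowVec k f a v ^ 2) ≤ m * 0 := by linarith
    have h2 := le_of_mul_le_mul_left h1 hm'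
    linarith
  have hρi : ∀ i, rhoQ (windowGraph k m fun _ => d i) = ρ := by
    intro i
    have h1 := edgeForm_le (windowGraph k m fun _ => d i) (windowVec k f fun _ => a i)
    have h2 := hzero i
    refine le_antisymm ((hmax i).1.trans hρ) ?_
    have h3 : 2 * ρ * ∑ v, windowVec k f (fun _ : Fin m => a i) v ^ 2
      ≤ 2 * rhoQ (windowGraph k m fun _ => d i)
        * ∑ v, windowVec k f (fun _ : Fin m => a i) v ^ 2 := by linarith
    have := le_of_mul_le_mul_right h3 (hN i)
    linarith
  have heig : ∀ i j (hj : j ≤ k), signlessAt (windowGraph k m fun _ => d i)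
      (windowVec k f fun _ => a i) (.inl ⟨j, by omega⟩) = ρ * f j := by
    intro i j hj
    rw [signlessAt_of_edgeForm_eq, hρi]
    · rfl
    · rw [hρi]
      linarith [hzero i]
  -- two different windows would give different eigenvalue equations at the lowest vertex of the
  -- lower one, although the entries along the path coincide
  have hnlt : ∀ i i', ¬ d i < d i' := by
    intro i i' hlt
    have hk : d i ≤ k := by linarith [hd i]
    have h1 := heig i (d i) hk
    have h2 := heig i' (d i) hk
    rw [signlessAt_inl _ _ _ hk] at h1 h2
    rw [← h2] at h1
    have h3 : ∑ w : Fin m, (if d i ≤ d i ∧ d i ≤ d i + 2 then f (d i) + a i else 0)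
        = m * (f (d i) + a i) := by simp [mul_add]
    have h4 : ∑ w : Fin m, (if d i' ≤ d i ∧ d i ≤ d i' + 2 then f (d i) + a i' else 0) = 0 :=
      Finset.sum_eq_zero fun _ _ => if_neg (by omega)
    rw [h3, h4] at h1
    have h5 := mul_pos hm' (add_pos (hf _ hk) (ha i))
    linarith
  have hdc : d = fun _ => d ⟨0, hm⟩ := by
    funext i
    have h1 := hnlt i ⟨0, hm⟩
    have h2 := hnlt ⟨0, hm⟩ i
    omega
  obtain ⟨φ⟩ := (hmax ⟨0, hm⟩).2 (le_antisymm (hmax _).1 (hρ.trans (hρi _).ge))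
  rw [hGeq, hdc]
  exact ⟨φ⟩

/-! ### Bugs and geodesics -/

/-- A single-window graph is a bug: the middle vertex of the window joins the clique. -/
theorem windowGraph_iso_bugGraph (m q r : ℕ) (hq : 1 ≤ q) (hr : 1 ≤ r) :
    Nonempty (windowGraph (q + r) m (fun _ => q - 1) ≃g bugGraph (m + 3) q r) := by
  let g : Fin (q + r + 1) ⊕ Fin m → Fin (m + 3 + q + r - 2) :=
    Sum.elim (fun i => ⟨if i.val ≤ q then i.val else i.val + m, by split_ifs <;> omega⟩)
      (fun w => ⟨q + 1 + w.val, by omega⟩)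
  have gl : ∀ i, (g (.inl i)).val = if i.val ≤ q then i.val else i.val + m := fun _ => rfl
  have gr : ∀ w, (g (.inr w)).val = q + 1 + w.val := fun _ => rfl
  have hinj : Function.Injective g := by
    rintro (i | w) (j | w') h <;> have h := congrArg Fin.val h <;> simp only [gl, gr] at h
    · congr 1; apply Fin.ext; split_ifs at h <;> omega
    · exfalso; split_ifs at h <;> omega
    · exfalso; split_ifs at h <;> omega
    · congr 1; apply Fin.ext; omega
  have hbij : Function.Bijective g := by
    rw [Fintype.bijective_iff_injective_and_card]
    refine ⟨hinj, ?_⟩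
    simp only [Fintype.card_sum, Fintype.card_fin]
    omega
  refine ⟨⟨Equiv.ofBijective g hbij, ?_⟩⟩
  intro u v
  rw [Equiv.ofBijective_apply, Equiv.ofBijective_apply, bugGraph, SimpleGraph.fromRel_adj,
    ne_eq, Fin.ext_iff]
  rcases u with i | w <;> rcases v with j | w'
  · simp only [gl, windowGraph_inl_inl]
    split_ifs <;> omega
  · simp only [gl, gr, windowGraph_inl_inr]
    split_ifs <;> omega
  · simp only [gl, gr, windowGraph_inr_inl]
    split_ifs <;> omega
  · simp only [gr, windowGraph_inr_inr, ne_eq, Fin.ext_iff]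
    omega

/-- A graph of diameter at least `k` contains an isometric path of length `k`. -/
theorem exists_geodesic {V : Type*} [Finite V] (G : SimpleGraph V) (hconn : G.Connected) {k : ℕ}
    (hdiam : k ≤ G.diam) :
    ∃ v : ℕ → V, ∀ i j, i ≤ j → j ≤ k → G.dist (v i) (v j) = j - i := by
  have := hconn.nonempty
  obtain ⟨u, w, huw⟩ := G.exists_dist_eq_diam
  obtain ⟨p, hp⟩ := hconn.exists_walk_length_eq_dist u w
  refine ⟨p.getVert, fun i j hij hj => ?_⟩
  have hlen : j ≤ p.length := by omega
  have hstep : ∀ b a, a + b ≤ p.length → G.dist (p.getVert a) (p.getVert (a + b)) ≤ b := by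
    intro b
    induction b with
    | zero => intro a _; simp
    | succ b ih =>
      intro a hab
      have h1 := ih a (by omega)
      have h2 : G.Adj (p.getVert (a + b)) (p.getVert (a + b + 1)) :=
        p.adj_getVert_succ (by omega)
      have h3 := hconn.dist_triangle (u := p.getVert a) (v := p.getVert (a + b))
        (w := p.getVert (a + b + 1))
      rw [SimpleGraph.dist_eq_one_iff_adj.mpr h2] at h3
      rw [← add_assoc]
      omega
  have h1 := hstep i 0 (by omega)
  have h2 := hstep (j - i) i (by omega)
  have h3 := hstep (p.length - j) j (by omega)
  rw [zero_add, p.getVert_zero] at h1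
  rw [show i + (j - i) = j by omega] at h2
  rw [show j + (p.length - j) = p.length by omega, p.getVert_length] at h3
  have t1 := hconn.dist_triangle (u := u) (v := p.getVert i) (w := w)
  have t2 := hconn.dist_triangle (u := p.getVert i) (v := p.getVert j) (w := w)
  omega

/-- Up to isomorphism, a connected graph of diameter at least `k` is a subgraph of a window graph
over a geodesic path with `k + 1` vertices. -/
theorem exists_windowGraph {V : Type*} [Fintype V] [DecidableEq V] (G : SimpleGraph V) {k : ℕ}
    (hk : 2 ≤ k) (hconn : G.Connected) (hdiam : k ≤ G.diam) :
    ∃ m, Fintype.card V = k + 1 + m ∧ ∃ d : Fin m → ℕ, (∀ w, d w + 2 ≤ k) ∧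
      ∃ G' : SimpleGraph (Fin (k + 1) ⊕ Fin m), Nonempty (G ≃g G') ∧ G' ≤ windowGraph k m d ∧
        ∀ i j, (windowGraph k m d).Adj (.inl i) (.inl j) → G'.Adj (.inl i) (.inl j) := by
  classical
  obtain ⟨v, hv⟩ := exists_geodesic G hconn hdiam
  have hinj : Function.Injective fun i : Fin (k + 1) => v i.val := by
    intro i j hij
    simp only at hij
    apply Fin.ext
    rcases le_total i.val j.val with h | h
    · have := hv _ _ h (by omega)
      rw [hij, SimpleGraph.dist_self] at this
      omega
    · have := hv _ _ h (by omega)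
      rw [hij, SimpleGraph.dist_self] at this
      omega
  set R := Set.range fun i : Fin (k + 1) => v i.val with hR
  let m := Fintype.card (Rᶜ : Set V)
  let φ : Fin (k + 1) ⊕ Fin m ≃ V :=
    (Equiv.sumCongr (Equiv.ofInjective _ hinj) (Fintype.equivFin (Rᶜ : Set V)).symm).trans
      (Equiv.Set.sumCompl R)
  have hφ : ∀ i, φ (.inl i) = v i.val := fun i => by simp [φ]
  have hadj : ∀ i j : Fin (k + 1), G.Adj (v i.val) (v j.val)
      ↔ (i.val + 1 = j.val ∨ j.val + 1 = i.val) := by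
    intro i j
    rw [← SimpleGraph.dist_eq_one_iff_adj]
    rcases le_total i.val j.val with h | h
    · rw [hv _ _ h (by omega)]; omega
    · rw [SimpleGraph.dist_comm, hv _ _ h (by omega)]; omega
  have hclose : ∀ (x : V) (i j : ℕ), j ≤ k → G.Adj x (v i) → G.Adj x (v j) → j ≤ i + 2 := by
    intro x i j hj hi hj'
    by_contra hcon
    have h1 := hv i j (by omega) hj
    have h2 := hconn.dist_triangle (u := v i) (v := x) (w := v j)
    rw [SimpleGraph.dist_eq_one_iff_adj.mpr hi.symm, SimpleGraph.dist_eq_one_iff_adj.mpr hj'] at h2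
    omega
  -- the neighbours of a vertex on the geodesic span at most three consecutive positions
  have hwin : ∀ x : V, ∃ e, e + 2 ≤ k ∧ ∀ j, j ≤ k → G.Adj x (v j) → e ≤ j ∧ j ≤ e + 2 := by
    intro x
    by_cases hex : ∃ j, j ≤ k ∧ G.Adj x (v j)
    · have hmin := Nat.find_spec hex
      set i := Nat.find hex with hi
      refine ⟨min i (k - 2), by omega, fun j hj hxj => ?_⟩
      have h1 : i ≤ j := Nat.find_min' hex ⟨hj, hxj⟩
      have h2 := hclose x i j hj hmin.2 hxj
      omega
    · exact ⟨0, by omega, fun j hj hxj => absurd ⟨j, hj, hxj⟩ hex⟩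
  choose c hc1 hc2 using hwin
  refine ⟨m, ?_, fun w => c (φ (.inr w)), fun w => hc1 _, G.comap φ,
    ⟨(SimpleGraph.Iso.comap φ G).symm⟩, ?_, ?_⟩
  · rw [← Fintype.card_congr φ, Fintype.card_sum, Fintype.card_fin, Fintype.card_fin]
  · rintro (i | w) (j | w') h
    · rw [SimpleGraph.comap_adj, hφ, hφ] at h
      exact (hadj i j).mp h
    · rw [SimpleGraph.comap_adj, hφ] at h
      exact hc2 _ _ (by omega) h.symm
    · rw [SimpleGraph.comap_adj, hφ] at h
      exact hc2 _ _ (by omega) h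
    · rw [windowGraph_inr_inr]
      rintro rfl
      exact h.ne rfl
  · intro i j h
    rw [SimpleGraph.comap_adj, hφ, hφ]
    exact (hadj i j).mpr h

/-- Liu–Lu. Let `G` be a graph of order `n` with diameter at
least `k`, where `k ≥ 2`. Then `ρ(Q(G)) ≤ ρ(Q(B_{n−k+2,⌊k/2⌋,⌈k/2⌉}))`, with
equality if and only if `G` is isomorphic to `B_{n−k+2,⌊k/2⌋,⌈k/2⌉}`. -/
theorem signlessLaplacian_spectralRadius_le_of_diam {n k : ℕ}
    {V : Type*} [Fintype V] [DecidableEq V] (G : SimpleGraph V)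
    (hcard : Fintype.card V = n) (hk : 2 ≤ k)
    (hconn : G.Connected) (hdiam : k ≤ G.diam) :
    rhoQ G ≤ rhoQ (bugGraph (n - k + 2) (k / 2) ((k + 1) / 2)) ∧
      (rhoQ G = rhoQ (bugGraph (n - k + 2) (k / 2) ((k + 1) / 2)) ↔
        Nonempty (G ≃g bugGraph (n - k + 2) (k / 2) ((k + 1) / 2))) := by
  have := hconn.nonempty
  obtain ⟨m, hm, d, hd, G', ⟨φ⟩, hle, hpath⟩ := exists_windowGraph G hk hconn hdiam
  rw [show n - k + 2 = m + 3 by omega]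
  obtain ⟨ψ⟩ := windowGraph_iso_bugGraph m (k / 2) ((k + 1) / 2) (by omega) (by omega)
  rw [show k / 2 + (k + 1) / 2 = k by omega] at ψ
  have hψ := rhoQ_eq_of_iso _ ψ
  have hφ := rhoQ_eq_of_iso _ φ
  have hconn' : G'.Connected := φ.connected_iff.mp hconn
  have key : rhoQ (windowGraph k m fun _ => k / 2 - 1) ≤ rhoQ G' →
      Nonempty (G' ≃g windowGraph k m fun _ => k / 2 - 1) := by
    intro h
    rcases Nat.eq_zero_or_pos m with h0 | h0
    -- for `m = 0` the geodesic is spanning, so both graphs are the path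
    · subst h0
      have hG' : G' = windowGraph k 0 fun _ => k / 2 - 1 := by
        ext u v
        rcases u with i | w
        · rcases v with j | w'
          · exact ⟨fun h => hle h, hpath i j⟩
          · exact w'.elim0
        · exact w.elim0
      rw [hG']
      exact ⟨SimpleGraph.Iso.refl⟩
    · exact iso_of_le_rhoQ h0 hd hconn' hle h
  have key' : rhoQ (bugGraph (m + 3) (k / 2) ((k + 1) / 2)) ≤ rhoQ G →
      Nonempty (G ≃g bugGraph (m + 3) (k / 2) ((k + 1) / 2)) := by
    intro h
    obtain ⟨θ⟩ := key (by rw [hψ, ← hφ]; exact h)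
    exact ⟨(φ.trans θ).trans ψ⟩
  refine ⟨?_, fun h => key' h.ge, fun ⟨θ⟩ => rhoQ_eq_of_iso G θ⟩
  by_contra hcon
  rw [not_le] at hcon
  obtain ⟨θ⟩ := key' hcon.le
  exact hcon.ne' (rhoQ_eq_of_iso G θ)
end
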